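/- Let X be a tree and let f : X → X be a continuous map with zero topological entropy, and let ω_f(x) be an infinite ω-limit set of f. Then there are infinitely many points a ∈ ω_f(x) for which the intersection of all periodic arcs of f containing a is reduced to the singleton {a}. -/

import Mathlib

open Set Filter Topology Function
open scoped ENNReal

/-- A subset of a topological space is an *arc* if it is homeomorphic to `[0,1]`. -/
def IsArc {X : Type*} [TopologicalSpace X] (A : Set X) : Prop :=
  Nonempty (A ≃ₜ Set.Icc (0 : ℝ) 1)

/-- A point `p` is an *endpoint* of the arc `A` if `p ∈ A` and `A \ {p}` is connected. -/
def IsArcEndpoint {X : Type*} [TopologicalSpace X] (A : Set X) (p : X) : Prop :=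
  p ∈ A ∧ IsConnected (A \ {p})

/-- A subset is a *simple closed curve* if it is homeomorphic to the unit circle. -/
def IsSimpleClosedCurve {X : Type*} [TopologicalSpace X] (S : Set X) : Prop :=
  Nonempty (S ≃ₜ Metric.sphere (0 : ℂ) 1)

/-- A *tree* is a compact connected metric space which is a union of finitely many arcs,
any two of which are disjoint or intersect only in (one or both of) their endpoints,
and which contains no simple closed curve. -/
def IsTree (X : Type*) [MetricSpace X] : Prop :=
  CompactSpace X ∧ ConnectedSpace X ∧
    (∃ 𝒜 : Finset (Set X), (∀ A ∈ 𝒜, IsArc A) ∧ ⋃₀ (𝒜 : Set (Set X)) = Set.univ ∧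
      ∀ A ∈ 𝒜, ∀ B ∈ 𝒜, A ≠ B → ∀ p ∈ A ∩ B, IsArcEndpoint A p ∧ IsArcEndpoint B p) ∧
    ∀ S : Set X, ¬ IsSimpleClosedCurve S

/-- A *dendrite* is a locally connected continuum containing no simple closed curve. -/
def IsDendrite (X : Type*) [MetricSpace X] : Prop :=
  CompactSpace X ∧ ConnectedSpace X ∧ LocallyConnectedSpace X ∧
    ∀ S : Set X, ¬ IsSimpleClosedCurve S

/-- `𝒰` is a finite open cover of the subset `Y`. -/
def IsOpenCoverOn {X : Type*} [TopologicalSpace X] (Y : Set X) (𝒰 : Finset (Set X)) : Prop :=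
  (∀ U ∈ 𝒰, IsOpen U) ∧ Y ⊆ ⋃₀ (𝒰 : Set (Set X))

/-- `N(⋁_{i=1}^n f^{-a_i}(𝒰))`, relative to the subset `Y`: the minimal number `m` of elements
of the join cover `⋁_{i=1}^n f^{-a_i}(𝒰)` needed to cover `Y`. -/
noncomputable def seqCoverCountOn {X : Type*} (f : X → X) (Y : Set X) (a : ℕ → ℕ)
    (𝒰 : Finset (Set X)) (n : ℕ) : ℕ :=
  sInf { m | ∃ c : Fin m → Fin n → Set X, (∀ j i, c j i ∈ 𝒰) ∧
    Y ⊆ ⋃ j, ⋂ i, f^[a i.1] ⁻¹' c j i }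

/-- Topological sequence entropy of `f` restricted to the (invariant) subset `Y`,
with respect to the sequence `a`. -/
noncomputable def seqEntropyOn {X : Type*} [TopologicalSpace X] (f : X → X) (Y : Set X)
    (a : ℕ → ℕ) : ℝ≥0∞ :=
  ⨆ (𝒰 : Finset (Set X)) (_ : IsOpenCoverOn Y 𝒰),
    Filter.limsup
      (fun n : ℕ => ENNReal.ofReal (Real.log (seqCoverCountOn f Y a 𝒰 n) / n)) Filter.atTop

/-- Topological sequence entropy of `f : X → X` with respect to the sequence `a`. -/
noncomputable def seqEntropy {X : Type*} [TopologicalSpace X] (f : X → X) (a : ℕ → ℕ) : ℝ≥0∞ :=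
  seqEntropyOn f Set.univ a

/-- The ordinary topological entropy `h(f)`, i.e. the sequence entropy for `A = (0,1,2,…)`. -/
noncomputable def topEntropy {X : Type*} [TopologicalSpace X] (f : X → X) : ℝ≥0∞ :=
  seqEntropy f id

/-- `h_∞(f|_Y)`: the supremum over all strictly increasing sequences of positive integers of
the topological sequence entropies of `f` restricted to `Y`. -/
noncomputable def supSeqEntropyOn {X : Type*} [TopologicalSpace X] (f : X → X) (Y : Set X) :
    ℝ≥0∞ :=
  ⨆ (a : ℕ → ℕ) (_ : StrictMono a) (_ : 1 ≤ a 0), seqEntropyOn f Y a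

/-- `h_∞(f)`: the supremum of the topological sequence entropies of `f`. -/
noncomputable def supSeqEntropy {X : Type*} [TopologicalSpace X] (f : X → X) : ℝ≥0∞ :=
  supSeqEntropyOn f Set.univ

/-- The ω-limit set `ω_f(x) = ⋂_n closure {f^k(x) : k ≥ n}`. -/
def omegaLimitSet {X : Type*} [TopologicalSpace X] (f : X → X) (x : X) : Set X :=
  ⋂ n : ℕ, closure ((fun k => f^[k] x) '' Set.Ici n)

/-- `ω(f) = ⋃_x ω_f(x)`. -/
def omegaSet {X : Type*} [TopologicalSpace X] (f : X → X) : Set X :=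
  ⋃ x : X, omegaLimitSet f x

/-- The non-wandering set `Ω(f)`. -/
def nonWanderingSet {X : Type*} [TopologicalSpace X] (f : X → X) : Set X :=
  { x | ∀ U : Set X, IsOpen U → x ∈ U → ∃ n, 1 ≤ n ∧ (f^[n] ⁻¹' U ∩ U).Nonempty }

/-- There is an ε-chain from `x` to `y` under `f`. -/
def EpsChain {X : Type*} [MetricSpace X] (f : X → X) (ε : ℝ) (x y : X) : Prop :=
  ∃ n, 1 ≤ n ∧ ∃ c : ℕ → X, c 0 = x ∧ c n = y ∧ ∀ i < n, dist (f (c i)) (c (i + 1)) < ε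

/-- The chain recurrent set `CR(f)`. -/
def chainRecurrentSet {X : Type*} [MetricSpace X] (f : X → X) : Set X :=
  { x | ∀ ε > 0, EpsChain f ε x x }

/-- The chain recurrent set of the restriction `f|_Y`: chain recurrence witnessed by
ε-chains lying entirely inside `Y`. -/
def chainRecurrentSetOn {X : Type*} [MetricSpace X] (f : X → X) (Y : Set X) : Set X :=
  { x ∈ Y | ∀ ε > 0, ∃ n, 1 ≤ n ∧ ∃ c : ℕ → X, c 0 = x ∧ c n = x ∧
      (∀ i ≤ n, c i ∈ Y) ∧ ∀ i < n, dist (f (c i)) (c (i + 1)) < ε }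

/-- `I` is a periodic arc of `f` of period `s`: an arc with `f^s(I) ⊆ I` whose iterates
`I, f(I), …, f^{s-1}(I)` are pairwise disjoint. -/
def IsPeriodicArc {X : Type*} [TopologicalSpace X] (f : X → X) (I : Set X) (s : ℕ) : Prop :=
  IsArc I ∧ 1 ≤ s ∧ Set.MapsTo f^[s] I I ∧
    ∀ i j, i < j → j < s → Disjoint (f^[i] '' I) (f^[j] '' I)

/-- `Orb_f(I) = I ∪ f(I) ∪ … ∪ f^{s-1}(I)`. -/
def arcOrbit {X : Type*} (f : X → X) (I : Set X) (s : ℕ) : Set X :=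
  ⋃ i ∈ Finset.range s, f^[i] '' I

/-- `I` is an independence set for the pair `(U, V)` under `f`. -/
def IsIndepSetPair {X : Type*} (f : X → X) (U V : Set X) (I : Finset ℕ) : Prop :=
  ∀ J ⊆ I, J.Nonempty → ∀ s : ℕ → Bool,
    (⋂ j ∈ J, f^[j] ⁻¹' (if s j then U else V)).Nonempty

/-- `(x, y)` is an IN-pair of `(X, f)`. -/
def INPair {X : Type*} [TopologicalSpace X] (f : X → X) (x y : X) : Prop :=
  ∀ U ∈ nhds x, ∀ V ∈ nhds y, ∀ m : ℕ, ∃ I : Finset ℕ, m ≤ I.card ∧ IsIndepSetPair f U V I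

/-- The set `IN(X, f)` of IN-pairs of `(X, f)`. -/
def INPairs {X : Type*} [TopologicalSpace X] (f : X → X) : Set (X × X) :=
  { p | INPair f p.1 p.2 }

/-- `(x, y)` is an IN-pair of the restricted (sub)system `(Y, f|_Y)`, for `Y` invariant. -/
def INPairOn {X : Type*} [TopologicalSpace X] (f : X → X) (Y : Set X) (x y : X) : Prop :=
  x ∈ Y ∧ y ∈ Y ∧ ∀ U ∈ nhds x, ∀ V ∈ nhds y, ∀ m : ℕ, ∃ I : Finset ℕ, m ≤ I.card ∧
    ∀ J ⊆ I, J.Nonempty → ∀ s : ℕ → Bool,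
      (Y ∩ ⋂ j ∈ J, f^[j] ⁻¹' (if s j then U else V)).Nonempty

/-- `(x, y)` is a Li–Yorke pair for `f`. -/
def LiYorkePair {X : Type*} [MetricSpace X] (f : X → X) (x y : X) : Prop :=
  Filter.liminf (fun n : ℕ => dist (f^[n] x) (f^[n] y)) Filter.atTop = 0 ∧
    0 < Filter.limsup (fun n : ℕ => dist (f^[n] x) (f^[n] y)) Filter.atTop


/-- no horseshoes -/
def NoHS {X : Type*} [TopologicalSpace X] (f : X → X) : Prop :=
  ∀ n : ℕ, 1 ≤ n → ∀ A B : Set X, IsClosed A → IsClosed B → Disjoint A B → A.Nonempty →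
    A ∪ B ⊆ f^[n] '' A → A ∪ B ⊆ f^[n] '' B → False

lemma hs_words {X : Type*} (f : X → X) (n : ℕ) (S : Bool → Set X)
    (hne : ∀ b, (S b).Nonempty) (h : ∀ b b', S b' ⊆ f^[n] '' S b) :
    ∀ (k : ℕ) (w : ℕ → Bool), ∃ z, ∀ i ≤ k, f^[i * n] z ∈ S (w i) := by
  intro k
  induction k with
  | zero =>
    intro w
    obtain ⟨z, hz⟩ := hne (w 0)
    refine ⟨z, ?_⟩
    intro i hi
    obtain rfl : i = 0 := by omega
    simpa using hz
  | succ k ih =>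
    intro w
    obtain ⟨z', hz'⟩ := ih (fun i => w (i+1))
    have h0 : z' ∈ S (w 1) := by simpa using hz' 0 (by omega)
    obtain ⟨z, hz, hzz⟩ := h (w 0) (w 1) h0
    refine ⟨z, ?_⟩
    intro i hi
    rcases i with _ | i
    · simpa using hz
    · have := hz' i (by omega)
      rw [Nat.succ_mul, Function.iterate_add_apply, hzz]
      exact this

lemma noHS_of_entropy {X : Type*} [TopologicalSpace X] (f : X → X) (h0 : topEntropy f = 0) :
    NoHS f := by
  classical
  intro n hn A B hA hB hAB hne hA' hB'
  let 𝒰 : Finset (Set X) := {Aᶜ, Bᶜ}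
  have hcov : IsOpenCoverOn Set.univ 𝒰 := by
    refine ⟨?_, ?_⟩
    · intro U hU
      simp only [𝒰, Finset.mem_insert, Finset.mem_singleton] at hU
      rcases hU with rfl | rfl
      · exact hA.isOpen_compl
      · exact hB.isOpen_compl
    · intro x _
      by_cases hx : x ∈ A
      · exact ⟨Bᶜ, by simp [𝒰], fun hb => Set.disjoint_left.1 hAB hx hb⟩
      · exact ⟨Aᶜ, by simp [𝒰], hx⟩
  have hBne : B.Nonempty := by
    obtain ⟨a, ha⟩ := hne
    obtain ⟨b, hb, _⟩ := hB' (Or.inl ha)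
    exact ⟨b, hb⟩
  have hlim : Filter.limsup
      (fun n : ℕ => ENNReal.ofReal (Real.log (seqCoverCountOn f Set.univ id 𝒰 n) / n)) atTop
        = 0 := by
    have h1 : seqEntropyOn f Set.univ id = 0 := h0
    unfold seqEntropyOn at h1
    refine le_antisymm ?_ bot_le
    rw [← h1]
    exact le_iSup₂_of_le (f := fun (𝒰 : Finset (Set X)) (_ : IsOpenCoverOn Set.univ 𝒰) =>
      Filter.limsup (fun n : ℕ => ENNReal.ofReal
        (Real.log (seqCoverCountOn f Set.univ id 𝒰 n) / n)) atTop) 𝒰 hcov le_rfl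
  let S : Bool → Set X := fun b => if b then A else B
  have hS : ∀ b b', S b' ⊆ f^[n] '' S b := by
    intro b b'
    cases b <;> cases b' <;> simp only [S] <;> intro y hy
    · exact hB' (Or.inr hy)
    · exact hB' (Or.inl hy)
    · exact hA' (Or.inr hy)
    · exact hA' (Or.inl hy)
  have hSne : ∀ b, (S b).Nonempty := by
    intro b; cases b <;> simp [S, hne, hBne]
  have hw := hs_words f n S hSne hS
  have hcount : ∀ k : ℕ, 2 ^ k ≤ seqCoverCountOn f Set.univ id 𝒰 (k * n) := by
    intro k
    have hmem : seqCoverCountOn f Set.univ id 𝒰 (k * n) ∈ { m | ∃ c : Fin m → Fin (k*n) → Set X,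
        (∀ j i, c j i ∈ 𝒰) ∧ (Set.univ : Set X) ⊆ ⋃ j, ⋂ i, f^[id i.1] ⁻¹' c j i } := by
      apply Nat.sInf_mem
      let T := Fin (k*n) → 𝒰
      refine ⟨Fintype.card T, fun j i => ((Fintype.equivFin T).symm j i : Set X), ?_, ?_⟩
      · intro j i; exact ((Fintype.equivFin T).symm j i).2
      · intro x _
        have : ∀ i : Fin (k*n), ∃ U : 𝒰, f^[id i.1] x ∈ (U : Set X) := by
          intro i
          obtain ⟨U, hU, hxU⟩ := hcov.2 (Set.mem_univ (f^[id i.1] x))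
          exact ⟨⟨U, hU⟩, hxU⟩
        choose g hg using this
        rw [Set.mem_iUnion]
        refine ⟨Fintype.equivFin T g, ?_⟩
        rw [Set.mem_iInter]
        intro i
        simpa using hg i
    obtain ⟨c, hc, hcc⟩ := hmem
    generalize seqCoverCountOn f Set.univ id 𝒰 (k * n) = m at c hc hcc ⊢
    have hz : ∀ w : Fin k → Bool, ∃ z, ∀ i : Fin k, f^[i.1 * n] z ∈ S (w i) := by
      intro w
      obtain ⟨z, hz⟩ := hw k (fun i => if h : i < k then w ⟨i, h⟩ else true)
      refine ⟨z, fun i => ?_⟩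
      have := hz i.1 i.2.le
      simpa using this
    choose z hz using hz
    have hj : ∀ w : Fin k → Bool, ∃ j, z w ∈ ⋂ i, f^[id i.1] ⁻¹' c j i := by
      intro w
      have := hcc (Set.mem_univ (z w))
      exact Set.mem_iUnion.1 this
    choose j hj using hj
    have hinj : Function.Injective j := by
      intro w w' hww
      funext i
      by_contra hne
      have hlt : i.1 * n < k * n := Nat.mul_lt_mul_of_pos_right i.2 hn
      have h1 := Set.mem_iInter.1 (hj w) ⟨i.1 * n, hlt⟩
      have h2 := Set.mem_iInter.1 (hj w') ⟨i.1 * n, hlt⟩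
      rw [← hww] at h2
      have h3 := hc (j w) ⟨i.1*n, hlt⟩
      have h4 := hz w i
      have h5 := hz w' i
      simp only [𝒰, Finset.mem_insert, Finset.mem_singleton] at h3
      simp only [id, Set.mem_preimage] at h1 h2
      rcases h3 with h3 | h3 <;> rw [h3] at h1 h2 <;> cases hwi : w i <;> cases hwi' : w' i <;>
        simp_all [S]
    have := Fintype.card_le_of_injective j hinj
    simpa using this
  have hpos : (0 : ℝ≥0∞) < ENNReal.ofReal (Real.log 2 / n) := by
    rw [ENNReal.ofReal_pos]
    have : (0:ℝ) < n := by exact_mod_cast hn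
    have := Real.log_pos (one_lt_two)
    positivity
  have hle : ENNReal.ofReal (Real.log 2 / n) ≤ 0 := by
    rw [← hlim]
    apply le_limsup_of_frequently_le
    · rw [Filter.frequently_atTop]
      intro N
      refine ⟨(N+1) * n, ?_, ?_⟩
      · nlinarith
      · apply ENNReal.ofReal_le_ofReal
        have h2 := hcount (N+1)
        have h3 : ((2:ℝ)^(N+1)) ≤ (seqCoverCountOn f Set.univ id 𝒰 ((N+1) * n) : ℝ) := by
          exact_mod_cast h2
        have h4 := Real.log_le_log (by positivity) h3
        rw [Real.log_pow] at h4
        have hn' : (0:ℝ) < n := by exact_mod_cast hn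
        have hN : (0:ℝ) < ((N+1 : ℕ) : ℝ) := by positivity
        rw [div_le_div_iff₀ hn' (by positivity)]
        push_cast at h4 ⊢
        nlinarith
    · isBoundedDefault
  exact absurd hpos (not_lt.2 hle)


/-- arc-joined inside `Y` (possibly equal points) -/
def ArcJ {X : Type*} [TopologicalSpace X] (Y : Set X) (a b : X) : Prop :=
  a = b ∨ ∃ γ : ℝ → X, ContinuousOn γ (Icc 0 1) ∧ InjOn γ (Icc 0 1) ∧ MapsTo γ (Icc 0 1) Y ∧
    γ 0 = a ∧ γ 1 = b

lemma arc_reparam {X : Type*} [TopologicalSpace X] {Y : Set X} {γ : ℝ → X}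
    (h1 : ContinuousOn γ (Icc 0 1)) (h2 : InjOn γ (Icc 0 1)) (h3 : MapsTo γ (Icc 0 1) Y)
    {u v : ℝ} (hu : u ∈ Icc (0:ℝ) 1) (hv : v ∈ Icc (0:ℝ) 1) (huv : u ≠ v) :
    ∃ δ : ℝ → X, ContinuousOn δ (Icc 0 1) ∧ InjOn δ (Icc 0 1) ∧ MapsTo δ (Icc 0 1) Y ∧
    δ 0 = γ u ∧ δ 1 = γ v ∧ ∀ t ∈ Icc (0:ℝ) 1, δ t = γ (u + t * (v - u)) := by
  have hm : MapsTo (fun t : ℝ => u + t * (v - u)) (Icc 0 1) (Icc 0 1) := by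
    rintro t ⟨ht0, ht1⟩
    obtain ⟨a, b⟩ := hu
    obtain ⟨a', b'⟩ := hv
    constructor <;> nlinarith
  refine ⟨fun t => γ (u + t * (v - u)), h1.comp (by fun_prop) hm, ?_, fun t ht => h3 (hm ht),
    by simp, by simp, fun _ _ => rfl⟩
  intro s hs t ht hst
  have := h2 (hm hs) (hm ht) hst
  have h : (s - t) * (v - u) = 0 := by simp only at this; linarith
  rcases mul_eq_zero.1 h with h | h
  · linarith
  · exact absurd (by linarith) huv

lemma ArcJ.sub {X : Type*} [TopologicalSpace X] {Y : Set X} {γ : ℝ → X}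
    (h1 : ContinuousOn γ (Icc 0 1)) (h2 : InjOn γ (Icc 0 1)) (h3 : MapsTo γ (Icc 0 1) Y)
    {u v : ℝ} (hu : u ∈ Icc (0:ℝ) 1) (hv : v ∈ Icc (0:ℝ) 1) : ArcJ Y (γ u) (γ v) := by
  by_cases huv : u = v
  · left; rw [huv]
  · obtain ⟨δ, a, b, c, d, e, _⟩ := arc_reparam h1 h2 h3 hu hv huv
    exact Or.inr ⟨δ, a, b, c, d, e⟩

lemma arc_concat {X : Type*} [TopologicalSpace X] {Y : Set X} {α β : ℝ → X}
    (a1 : ContinuousOn α (Icc 0 1)) (a2 : InjOn α (Icc 0 1)) (a3 : MapsTo α (Icc 0 1) Y)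
    (b1 : ContinuousOn β (Icc 0 1)) (b2 : InjOn β (Icc 0 1)) (b3 : MapsTo β (Icc 0 1) Y)
    (hab : α 1 = β 0)
    (hd : ∀ s ∈ Icc (0:ℝ) 1, ∀ t ∈ Icc (0:ℝ) 1, α s = β t → (s = 1 ∧ t = 0) ∨ (s = 0 ∧ t = 1)) :
    ∃ γ : ℝ → X, ContinuousOn γ (Icc 0 1) ∧ MapsTo γ (Icc 0 1) Y ∧ γ 0 = α 0 ∧ γ 1 = β 1 ∧
      ∀ u ∈ Icc (0:ℝ) 1, ∀ v ∈ Icc (0:ℝ) 1, u < v → γ u = γ v → u = 0 ∧ v = 1 := by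
  let γ : ℝ → X := fun u => if u ≤ 1/2 then α (2*u) else β (2*u-1)
  have g1 : ∀ u, u ≤ 1/2 → γ u = α (2*u) := fun u hu => if_pos hu
  have g2 : ∀ u, 1/2 ≤ u → γ u = β (2*u-1) := by
    intro u hu
    rcases hu.eq_or_lt with h | h
    · rw [g1 u h.ge, ← h]; norm_num [hab]
    · exact if_neg (not_le.2 h)
  have m1 : MapsTo (fun u : ℝ => 2*u) (Icc 0 (1/2)) (Icc 0 1) := by
    rintro u ⟨h, h'⟩; constructor <;> simp only <;> linarith
  have m2 : MapsTo (fun u : ℝ => 2*u-1) (Icc (1/2) 1) (Icc 0 1) := by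
    rintro u ⟨h, h'⟩; constructor <;> simp only <;> linarith
  have hU : Icc (0:ℝ) 1 = Icc 0 (1/2) ∪ Icc (1/2) 1 := by
    rw [Icc_union_Icc_eq_Icc] <;> norm_num
  refine ⟨γ, ?_, ?_, ?_, ?_, ?_⟩
  · rw [hU]
    apply ContinuousOn.union_of_isClosed _ _ isClosed_Icc isClosed_Icc
    · exact (a1.comp (by fun_prop) m1).congr (fun u hu => g1 u hu.2)
    · exact (b1.comp (by fun_prop) m2).congr (fun u hu => g2 u hu.1)
  · intro u hu
    rw [hU] at hu
    rcases hu with hu | hu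
    · rw [g1 u hu.2]; exact a3 (m1 hu)
    · rw [g2 u hu.1]; exact b3 (m2 hu)
  · rw [g1 0 (by norm_num)]; norm_num
  · rw [g2 1 (by norm_num)]; norm_num
  · intro u hu v hv huv he
    rcases le_total v (1/2) with h | h
    · rw [g1 u (by linarith), g1 v h] at he
      have := a2 (m1 ⟨hu.1, by linarith⟩) (m1 ⟨hv.1, h⟩) he
      simp only at this; linarith
    · rcases le_total u (1/2) with h' | h'
      · rw [g1 u h', g2 v h] at he
        rcases hd _ (m1 ⟨hu.1, h'⟩) _ (m2 ⟨h, hv.2⟩) he with ⟨p, q⟩ | ⟨p, q⟩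
        · linarith
        · constructor <;> linarith
      · rw [g2 u h', g2 v h] at he
        have := b2 (m2 ⟨h', hu.2⟩) (m2 ⟨h, hv.2⟩) he
        simp only at this; linarith

lemma ArcJ.trans {X : Type*} [TopologicalSpace X] [T2Space X] {Y : Set X} {a b d : X}
    (h : ArcJ Y a b) (h' : ArcJ Y b d) : ArcJ Y a d := by
  rcases h with rfl | ⟨α, a1, a2, a3, rfl, hb⟩
  · exact h'
  rcases h' with rfl | ⟨β, b1, b2, b3, rfl, rfl⟩
  · exact Or.inr ⟨α, a1, a2, a3, rfl, hb⟩
  have hK : IsCompact (β '' Icc 0 1) := isCompact_Icc.image_of_continuousOn b1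
  have hC : IsClosed (Icc (0:ℝ) 1 ∩ α ⁻¹' (β '' Icc 0 1)) :=
    a1.preimage_isClosed_of_isClosed isClosed_Icc hK.isClosed
  have hC' : IsCompact (Icc (0:ℝ) 1 ∩ α ⁻¹' (β '' Icc 0 1)) :=
    isCompact_Icc.of_isClosed_subset hC inter_subset_left
  have hne : (Icc (0:ℝ) 1 ∩ α ⁻¹' (β '' Icc 0 1)).Nonempty :=
    ⟨1, by norm_num, 0, by norm_num, hb.symm⟩
  obtain ⟨t, ⟨ht, s, hs, hst⟩, hmin⟩ := hC'.exists_isLeast hne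
  by_cases ht0 : t = 0
  · subst ht0
    rw [← hst]
    exact ArcJ.sub b1 b2 b3 hs (by norm_num)
  by_cases hs1 : s = 1
  · subst hs1
    rw [hst]
    exact ArcJ.sub a1 a2 a3 (by norm_num) ht
  obtain ⟨α', p1, p2, p3, p4, p5, p6⟩ :=
    arc_reparam a1 a2 a3 (u := 0) (v := t) (by norm_num) ht (fun h => ht0 h.symm)
  obtain ⟨β', q1, q2, q3, q4, q5, q6⟩ :=
    arc_reparam b1 b2 b3 (u := s) (v := 1) hs (by norm_num) hs1
  have ht' : 0 < t := lt_of_le_of_ne ht.1 (Ne.symm ht0)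
  have hs' : s < 1 := lt_of_le_of_ne hs.2 hs1
  have hd : ∀ u ∈ Icc (0:ℝ) 1, ∀ v ∈ Icc (0:ℝ) 1, α' u = β' v → (u = 1 ∧ v = 0) := by
    intro u hu v hv huv
    rw [p6 u hu, q6 v hv] at huv
    have hv' : s + v * (1 - s) ∈ Icc (0:ℝ) 1 := by
      have := hs.1; have := hv.1; have := hv.2
      constructor <;> nlinarith
    have hu' : 0 + u * (t - 0) ∈ Icc (0:ℝ) 1 := by
      have := ht.2; have := hu.1; have := hu.2
      constructor <;> nlinarith
    have hle : t ≤ 0 + u * (t - 0) := hmin ⟨hu', _, hv', huv.symm⟩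
    have hu1 : u = 1 := by have := hu.2; nlinarith
    refine ⟨hu1, ?_⟩
    subst hu1
    have : α (0 + 1 * (t - 0)) = β s := by rw [hst]; ring_nf
    rw [this] at huv
    have := b2 hs hv' huv
    have h0 : v * (1 - s) = 0 := by linarith
    rcases mul_eq_zero.1 h0 with h | h
    · exact h
    · linarith
  obtain ⟨γ, c1, c2, c3, c4, c5⟩ := arc_concat p1 p2 p3 q1 q2 q3 (by rw [p5, q4, hst])
    (fun u hu v hv huv => Or.inl (hd u hu v hv huv))
  by_cases he : α 0 = β 1
  · exact Or.inl he
  refine Or.inr ⟨γ, c1, ?_, c2, by rw [c3, p4], by rw [c4, q5]⟩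
  have key : ∀ u ∈ Icc (0:ℝ) 1, ∀ v ∈ Icc (0:ℝ) 1, u < v → γ u ≠ γ v := by
    intro u hu v hv huv e
    obtain ⟨rfl, rfl⟩ := c5 u hu v hv huv e
    rw [c3, c4, p4, q5] at e
    exact he e
  intro u hu v hv e
  rcases lt_trichotomy u v with h | h | h
  · exact absurd e (key u hu v hv h)
  · exact h
  · exact absurd e.symm (key v hv u hu h)

lemma scc_of_loop {X : Type*} [TopologicalSpace X] [T2Space X] (γ : ℝ → X)
    (h1 : ContinuousOn γ (Icc 0 1)) (h2 : γ 0 = γ 1)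
    (h3 : ∀ u ∈ Icc (0:ℝ) 1, ∀ v ∈ Icc (0:ℝ) 1, u < v → γ u = γ v → u = 0 ∧ v = 1) :
    ∃ S : Set X, IsSimpleClosedCurve S := by
  haveI : Fact ((0:ℝ) < 1) := ⟨one_pos⟩
  let g : AddCircle (1:ℝ) → X := AddCircle.liftIco 1 0 γ
  have hg : Continuous g := AddCircle.liftIco_zero_continuous h2 h1
  have hinj : Injective g := by
    have key : ∀ u ∈ Ico (0:ℝ) 1, ∀ v ∈ Ico (0:ℝ) 1, u < v → γ u ≠ γ v := by
      intro u hu v hv huv e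
      obtain ⟨_, rfl⟩ := h3 u ⟨hu.1, hu.2.le⟩ v ⟨hv.1, hv.2.le⟩ huv e
      exact lt_irrefl _ hv.2
    intro p q hpq
    obtain ⟨u, hu, rfl⟩ : ∃ u ∈ Ico (0:ℝ) 1, (u : AddCircle (1:ℝ)) = p := by
      obtain ⟨u, hu⟩ := (AddCircle.equivIco (1:ℝ) 0).symm.surjective p
      exact ⟨u.1, by simpa using u.2, hu⟩
    obtain ⟨v, hv, rfl⟩ : ∃ u ∈ Ico (0:ℝ) 1, (u : AddCircle (1:ℝ)) = q := by
      obtain ⟨u, hu⟩ := (AddCircle.equivIco (1:ℝ) 0).symm.surjective q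
      exact ⟨u.1, by simpa using u.2, hu⟩
    simp only [g] at hpq
    rw [AddCircle.liftIco_zero_coe_apply hu, AddCircle.liftIco_zero_coe_apply hv] at hpq
    rcases lt_trichotomy u v with h | h | h
    · exact absurd hpq (key u hu v hv h)
    · rw [h]
    · exact absurd hpq.symm (key v hv u hu h)
  have he : IsClosedEmbedding g := hg.isClosedEmbedding hinj
  have H : Circle ≃ₜ Metric.sphere (0 : ℂ) 1 := Homeomorph.refl _
  exact ⟨Set.range g, ⟨he.isEmbedding.toHomeomorph.symm.trans
    ((AddCircle.homeomorphCircle (one_ne_zero)).trans H)⟩⟩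


/-- An edge coordinate. -/
structure EdgeC (X : Type*) [TopologicalSpace X] where
  c : X → ℝ
  σ : ℝ → X
  hc : Continuous c
  hσ : Continuous σ
  cσ : ∀ s ∈ Ioo (0:ℝ) 1, c (σ s) = s
  σc : ∀ z, c z ∈ Ioo (0:ℝ) 1 → σ (c z) = z

lemma tree_edge {X : Type*} [MetricSpace X] (𝒜 : Finset (Set X)) (hA : ∀ A ∈ 𝒜, IsArc A)
    (hU : ⋃₀ (𝒜 : Set (Set X)) = Set.univ)
    (hE : ∀ A ∈ 𝒜, ∀ B ∈ 𝒜, A ≠ B → ∀ p ∈ A ∩ B, IsArcEndpoint A p ∧ IsArcEndpoint B p)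
    (hS : ∀ S : Set X, ¬ IsSimpleClosedCurve S) (E : Set X) (hEA : E ∈ 𝒜) :
    ∃ e : EdgeC X, {z ∈ E | e.c z ∉ Ioo (0:ℝ) 1}.Finite := by
  classical
  obtain ⟨h⟩ := hA E hEA
  let σ : ℝ → X := fun s => (h.symm (projIcc 0 1 zero_le_one s) : X)
  have hσ : Continuous σ := by
    exact continuous_subtype_val.comp (h.symm.continuous.comp continuous_projIcc)
  have hσE : ∀ s, σ s ∈ E := fun s => (h.symm (projIcc 0 1 zero_le_one s)).2
  have hσh : ∀ z : E, σ (h z) = z := by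
    intro z
    simp only [σ]
    rw [projIcc_of_mem zero_le_one (h z).2]
    simp
  have hhσ : ∀ s ∈ Icc (0:ℝ) 1, (h ⟨σ s, hσE s⟩ : ℝ) = s := by
    intro s hs
    have : (⟨σ s, hσE s⟩ : E) = h.symm ⟨s, hs⟩ :=
      Subtype.ext (by simp only [σ]; rw [projIcc_of_mem zero_le_one hs])
    rw [this]; simp
  have hσinj : InjOn σ (Icc 0 1) := by
    intro s hs t ht hst
    rw [← hhσ s hs, ← hhσ t ht]
    simp only [hst]
  -- other arcs
  let ℬ : Finset (Set X) := 𝒜.erase E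
  let Y : Set X := ⋃₀ (ℬ : Set (Set X))
  have hY : ∀ z, z ∈ Y ↔ ∃ B ∈ 𝒜, B ≠ E ∧ z ∈ B := by
    intro z
    simp only [Y, ℬ, mem_sUnion, Finset.mem_coe, Finset.mem_erase]
    tauto
  have hEY : ∀ z ∈ E, z ∈ Y → z = σ 0 ∨ z = σ 1 := by
    intro z hz hzY
    obtain ⟨B, hB, hBE, hzB⟩ := (hY z).1 hzY
    have hend := (hE E hEA B hB hBE.symm z ⟨hz, hzB⟩).1
    by_contra hcon
    push Not at hcon
    set s : ℝ := (h ⟨z, hz⟩).1 with hs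
    have hsz : σ s = z := hσh ⟨z, hz⟩
    have hsI : s ∈ Icc (0:ℝ) 1 := (h ⟨z, hz⟩).2
    have hs0 : s ≠ 0 := by intro h0; rw [h0] at hsz; exact hcon.1 hsz.symm
    have hs1 : s ≠ 1 := by intro h0; rw [h0] at hsz; exact hcon.2 hsz.symm
    have hconn : IsPreconnected ((fun z : E => (h z : ℝ)) '' (Subtype.val ⁻¹' (E \ {z}))) := by
      apply IsPreconnected.image
      · apply IsInducing.subtypeVal.isPreconnected_image.1
        rw [Subtype.image_preimage_coe]
        have : E ∩ (E \ {z}) = E \ {z} := by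
          ext; simp
        rw [this]
        exact hend.2.isPreconnected
      · exact (continuous_subtype_val.comp h.continuous).continuousOn
    have hz0 : σ 0 ≠ z := hcon.1.symm
    have hz1 : σ 1 ≠ z := hcon.2.symm
    have m0 : (0:ℝ) ∈ (fun z : E => (h z : ℝ)) '' (Subtype.val ⁻¹' (E \ {z})) :=
      ⟨⟨σ 0, hσE 0⟩, ⟨hσE 0, by simpa using hz0⟩, hhσ 0 (by norm_num)⟩
    have m1 : (1:ℝ) ∈ (fun z : E => (h z : ℝ)) '' (Subtype.val ⁻¹' (E \ {z})) :=
      ⟨⟨σ 1, hσE 1⟩, ⟨hσE 1, by simpa using hz1⟩, hhσ 1 (by norm_num)⟩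
    obtain ⟨w, ⟨_, hw⟩, hw'⟩ := hconn.Icc_subset m0 m1 hsI
    apply hw
    have : σ (h w) = w := hσh w
    simp only at hw'
    rw [hw', hsz] at this
    simp [this]
  -- arcs in B
  have hBarc : ∀ B ∈ ℬ, ∀ a ∈ B, ∀ b ∈ B, ArcJ Y a b := by
    intro B hB a ha b hb
    have hB' : B ∈ 𝒜 := Finset.mem_of_mem_erase hB
    obtain ⟨k⟩ := hA B hB'
    let τ : ℝ → X := fun s => (k.symm (projIcc 0 1 zero_le_one s) : X)
    have hτ : Continuous τ :=
      continuous_subtype_val.comp (k.symm.continuous.comp continuous_projIcc)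
    have hτB : ∀ s, τ s ∈ B := fun s => (k.symm (projIcc 0 1 zero_le_one s)).2
    have hτk : ∀ z : B, τ (k z) = z := by
      intro z
      simp only [τ]
      rw [projIcc_of_mem zero_le_one (k z).2]
      simp
    have hτinj : InjOn τ (Icc 0 1) := by
      intro s hs t ht hst
      simp only [τ] at hst
      rw [projIcc_of_mem zero_le_one hs, projIcc_of_mem zero_le_one ht] at hst
      have := k.symm.injective (Subtype.ext hst)
      simpa using this
    have := ArcJ.sub (Y := Y) hτ.continuousOn hτinj
      (fun s _ => (⟨B, hB, hτB s⟩ : τ s ∈ Y)) (k ⟨a, ha⟩).2 (k ⟨b, hb⟩).2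
    rwa [hτk, hτk] at this
  have hBcl : ∀ B ∈ ℬ, IsClosed B := by
    intro B hB
    obtain ⟨k⟩ := hA B (Finset.mem_of_mem_erase hB)
    have : CompactSpace B := k.symm.compactSpace
    exact (isCompact_iff_compactSpace.2 this).isClosed
  have hEcl : IsClosed E := by
    have : CompactSpace E := h.symm.compactSpace
    exact (isCompact_iff_compactSpace.2 this).isClosed
  let L : Set X := {z ∈ Y | ArcJ Y (σ 0) z}
  let R : Set X := {z ∈ Y | ¬ ArcJ Y (σ 0) z}
  have hBL : ∀ B ∈ ℬ, ∀ z ∈ B, z ∈ L → B ⊆ L := by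
    intro B hB z hz hzL w hw
    exact ⟨⟨B, hB, hw⟩, hzL.2.trans (hBarc B hB z hz w hw)⟩
  have hBR : ∀ B ∈ ℬ, ∀ z ∈ B, z ∈ R → B ⊆ R := by
    intro B hB z hz hzL w hw
    exact ⟨⟨B, hB, hw⟩, fun hh => hzL.2 (hh.trans (hBarc B hB w hw z hz))⟩
  have hclos : ∀ M : Set X, M ⊆ Y → (∀ B ∈ ℬ, ∀ z ∈ B, z ∈ M → B ⊆ M) → IsClosed M := by
    intro M hMY hM
    have : M = ⋃₀ ((ℬ.filter (fun B => B ⊆ M) : Finset (Set X)) : Set (Set X)) := by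
      ext z
      constructor
      · intro hz
        obtain ⟨B, hB, hzB⟩ := hMY hz
        exact ⟨B, by simpa using ⟨hB, hM B hB z hzB hz⟩, hzB⟩
      · rintro ⟨B, hB, hzB⟩
        simp only [Finset.coe_filter, mem_setOf_eq] at hB
        exact hB.2 hzB
    rw [this]
    rw [sUnion_eq_biUnion]
    refine Set.Finite.isClosed_biUnion (Finset.finite_toSet _) ?_
    intro B hB
    simp only [Finset.coe_filter, mem_setOf_eq] at hB
    exact hBcl B hB.1
  have hLcl : IsClosed L := hclos L (fun z hz => hz.1) hBL
  have hRcl : IsClosed R := hclos R (fun z hz => hz.1) hBR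
  have h01 : σ 0 ≠ σ 1 := by
    intro h0
    have := hσinj (by norm_num) (by norm_num) h0
    norm_num at this
  have h1L : σ 1 ∉ L := by
    rintro ⟨_, hj⟩
    rcases hj with hj | ⟨γ, g1, g2, g3, g4, g5⟩
    · exact h01 hj
    obtain ⟨β, b1, b2, b3, b4, b5, _⟩ := arc_reparam g1 g2 g3 (u := 1) (v := 0)
      (by norm_num) (by norm_num) (by norm_num)
    obtain ⟨δ, d1, d2, d3, d4, d5⟩ := arc_concat (Y := univ) (α := σ) (β := β) hσ.continuousOn hσinj
      (fun _ _ => mem_univ _) b1 b2 (fun _ _ => mem_univ _) (by rw [b4, g5]) (by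
        intro s hs t ht hst
        have hsY : σ s ∈ Y := by rw [hst]; exact b3 ht
        rcases hEY _ (hσE s) hsY with h0 | h0
        · right
          refine ⟨hσinj hs (by norm_num) h0, ?_⟩
          apply b2 ht (by norm_num)
          rw [b5, g4, ← h0, hst]
        · left
          refine ⟨hσinj hs (by norm_num) h0, ?_⟩
          apply b2 ht (by norm_num)
          rw [b4, g5, ← h0, hst])
    obtain ⟨S, hS'⟩ := scc_of_loop δ d1 (by rw [d3, d4, b5, g4]) d5
    exact hS S hS'
  have h0R : σ 0 ∉ R := fun hh => hh.2 (Or.inl rfl)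
  let c : X → ℝ := fun z => if hz : z ∈ E then (h ⟨z, hz⟩ : ℝ) else if z ∈ L then 0 else 1
  have cE : ∀ z (hz : z ∈ E), c z = h ⟨z, hz⟩ := fun z hz => dif_pos hz
  have cσ : ∀ s ∈ Icc (0:ℝ) 1, c (σ s) = s := by
    intro s hs
    rw [cE _ (hσE s), hhσ s hs]
  have cL : ∀ z ∈ L, c z = 0 := by
    intro z hz
    by_cases hzE : z ∈ E
    · rcases hEY z hzE hz.1 with rfl | rfl
      · exact cσ 0 (by norm_num)
      · exact absurd hz h1L
    · simp only [c]; rw [dif_neg hzE, if_pos hz]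
  have cR : ∀ z ∈ R, c z = 1 := by
    intro z hz
    by_cases hzE : z ∈ E
    · rcases hEY z hzE hz.1 with rfl | rfl
      · exact absurd hz h0R
      · exact cσ 1 (by norm_num)
    · simp only [c]; rw [dif_neg hzE, if_neg (fun hl => hz.2 hl.2)]
  have hcov : (E ∪ (L ∪ R)) = univ := by
    rw [eq_univ_iff_forall]
    intro z
    have : z ∈ ⋃₀ (𝒜 : Set (Set X)) := by rw [hU]; trivial
    obtain ⟨B, hB, hzB⟩ := this
    by_cases hBE : B = E
    · left; rwa [← hBE]
    · right
      have hzY : z ∈ Y := (hY z).2 ⟨B, hB, hBE, hzB⟩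
      by_cases hj : ArcJ Y (σ 0) z
      · left; exact ⟨hzY, hj⟩
      · right; exact ⟨hzY, hj⟩
  have hc : Continuous c := by
    rw [← continuousOn_univ, ← hcov]
    apply ContinuousOn.union_of_isClosed _ _ hEcl (hLcl.union hRcl)
    · rw [continuousOn_iff_continuous_domRestrict]
      have : E.domRestrict c = fun z => (h z : ℝ) := by
        funext z
        exact cE z.1 z.2
      rw [this]
      exact continuous_subtype_val.comp h.continuous
    · apply ContinuousOn.union_of_isClosed _ _ hLcl hRcl
      · exact continuousOn_const.congr cL
      · exact continuousOn_const.congr cR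
  refine ⟨⟨c, σ, hc, hσ, fun s hs => cσ s ⟨hs.1.le, hs.2.le⟩, ?_⟩, ?_⟩
  · intro z hz
    have hzE : z ∈ E := by
      have : z ∈ (E ∪ (L ∪ R)) := by rw [hcov]; trivial
      rcases this with hh | hh | hh
      · exact hh
      · rw [cL z hh] at hz; exact absurd hz.1 (lt_irrefl _)
      · rw [cR z hh] at hz; exact absurd hz.2 (lt_irrefl _)
    rw [cE z hzE]
    exact hσh ⟨z, hzE⟩
  · apply Set.Finite.subset (Set.toFinite {σ 0, σ 1})
    rintro z ⟨hzE, hz⟩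
    simp only at hz
    have hzz : σ (c z) = z := by rw [cE z hzE]; exact hσh ⟨z, hzE⟩
    have hI : c z ∈ Icc (0:ℝ) 1 := by rw [cE z hzE]; exact (h ⟨z, hzE⟩).2
    rcases hI.1.eq_or_lt with h' | h'
    · left; rw [h', hzz]
    · rcases hI.2.eq_or_lt with h'' | h''
      · right; rw [← h'', hzz]; rfl
      · exact absurd ⟨h', h''⟩ hz

lemma tree_edges {X : Type*} [MetricSpace X] (hX : IsTree X) :
    ∃ (m : ℕ) (e : Fin m → EdgeC X), {z | ∀ i, (e i).c z ∉ Ioo (0:ℝ) 1}.Finite := by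
  obtain ⟨_, _, ⟨𝒜, hA, hU, hE⟩, hS⟩ := hX
  have := fun E : 𝒜 => tree_edge 𝒜 hA hU hE hS E.1 E.2
  choose e he using this
  refine ⟨Fintype.card 𝒜, fun i => e ((Fintype.equivFin 𝒜).symm i), ?_⟩
  apply Set.Finite.subset (Set.finite_iUnion he)
  intro z hz
  have : z ∈ ⋃₀ (𝒜 : Set (Set X)) := by rw [hU]; trivial
  obtain ⟨B, hB, hzB⟩ := this
  rw [mem_iUnion]
  refine ⟨⟨B, hB⟩, hzB, ?_⟩
  have := hz (Fintype.equivFin 𝒜 ⟨B, hB⟩)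
  simpa using this


lemma EdgeC.cut {X : Type*} [TopologicalSpace X] (e : EdgeC X) {C : Set X} (hC : IsPreconnected C)
    {u v : X} (hu : u ∈ C) (hv : v ∈ C) {s : ℝ} (hs : s ∈ Ioo (0:ℝ) 1) (h1 : e.c u ≤ s)
    (h2 : s ≤ e.c v) : e.σ s ∈ C := by
  have h := (hC.image e.c e.hc.continuousOn).Icc_subset ⟨u, hu, rfl⟩ ⟨v, hv, rfl⟩ ⟨h1, h2⟩
  obtain ⟨w, hw, hws⟩ := h
  have := e.σc w (by rw [hws]; exact hs)
  rw [hws] at this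
  rwa [this]

lemma mem_omega_iff {X : Type*} [TopologicalSpace X] (f : X → X) (x z : X) :
    z ∈ omegaLimitSet f x ↔ MapClusterPt z atTop (fun t : ℕ => f^[t] x) := by
  rw [mapClusterPt_iff_frequently]
  simp only [omegaLimitSet, mem_iInter, mem_closure_iff_nhds, frequently_atTop]
  constructor
  · intro h s hs n
    obtain ⟨y, hy, k, hk, rfl⟩ := h n s hs
    exact ⟨k, hk, hy⟩
  · intro h n s hs
    obtain ⟨k, hk, hy⟩ := h s hs n
    exact ⟨_, hy, k, hk, rfl⟩

lemma omega_visit {X : Type*} [TopologicalSpace X] {f : X → X} {x z : X}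
    (hz : z ∈ omegaLimitSet f x) {U : Set X} (hU : IsOpen U) (hzU : z ∈ U) (n : ℕ) :
    ∃ t, n ≤ t ∧ f^[t] x ∈ U := by
  have := (mapClusterPt_iff_frequently.1 ((mem_omega_iff f x z).1 hz)) U (hU.mem_nhds hzU)
  obtain ⟨t, ht, h⟩ := frequently_atTop.1 this n
  exact ⟨t, ht, h⟩

lemma omega_closed {X : Type*} [TopologicalSpace X] (f : X → X) (x : X) :
    IsClosed (omegaLimitSet f x) := isClosed_iInter fun _ => isClosed_closure

lemma orbit_inj {X : Type*} [MetricSpace X] {f : X → X} {x : X}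
    (hx : (omegaLimitSet f x).Infinite) : Injective (fun t : ℕ => f^[t] x) := by
  have key : ∀ s d, f^[s + (d+1)] x = f^[s] x → False := by
    intro s d h
    apply hx
    have hper : ∀ t, s ≤ t → ∃ r < d + 1, f^[t] x = f^[s + r] x := by
      intro t ht
      induction t, ht using Nat.le_induction with
      | base => exact ⟨0, Nat.succ_pos _, rfl⟩
      | succ t _ ih =>
        obtain ⟨r, hr, he⟩ := ih
        rw [iterate_succ_apply', he, ← iterate_succ_apply' f]
        rcases Nat.lt_or_ge (r+1) (d+1) with h' | h'
        · exact ⟨r+1, h', rfl⟩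
        · have : r = d := by omega
          subst this
          exact ⟨0, Nat.succ_pos _, h⟩
    have hfin : ((fun r => f^[s + r] x) '' (Iio (d+1))).Finite := (Set.finite_Iio _).image _
    apply hfin.subset
    intro z hz
    have := mem_iInter.1 hz s
    apply (hfin.isClosed.closure_subset_iff.2 _) this
    rintro _ ⟨t, ht, rfl⟩
    obtain ⟨r, hr, he⟩ := hper t ht
    exact ⟨r, hr, he.symm⟩
  intro s t hst
  simp only at hst
  rcases lt_trichotomy s t with h | h | h
  · obtain ⟨d, rfl⟩ := Nat.exists_eq_add_of_lt h
    exact (key s d hst.symm).elim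
  · exact h
  · obtain ⟨d, rfl⟩ := Nat.exists_eq_add_of_lt h
    exact (key t d hst).elim

lemma omega_pow_infinite {X : Type*} [MetricSpace X] [CompactSpace X] {f : X → X}
    (hf : Continuous f) {x : X} (hx : (omegaLimitSet f x).Infinite) (n a : ℕ) (hn : 1 ≤ n) :
    (omegaLimitSet f^[n] (f^[a] x)).Infinite := by
  intro hfin
  apply hx
  have : (⋃ i ∈ Iio n, f^[i] '' (omegaLimitSet f^[n] (f^[a] x))).Finite :=
    Set.Finite.biUnion (Set.finite_Iio n) (fun i _ => hfin.image _)
  apply this.subset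
  intro z hz
  rw [mem_omega_iff, mapClusterPt_iff_ultrafilter] at hz
  obtain ⟨U, hU, hUz⟩ := hz
  have hres : ∃ i ∈ Iio n, ∀ᶠ t in (U : Filter ℕ), (t - a) % n = i := by
    rw [← Ultrafilter.eventually_exists_mem_iff (Set.finite_Iio n)]
    filter_upwards with t
    exact ⟨_, Nat.mod_lt _ hn, rfl⟩
  obtain ⟨i, hi, hres⟩ := hres
  let y : ℕ → X := fun k => (f^[n])^[k] (f^[a] x)
  let ρ : ℕ → ℕ := fun t => (t - a) / n
  have hρ : Tendsto ρ atTop atTop := by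
    apply tendsto_atTop.2
    intro b
    filter_upwards [eventually_ge_atTop (b * n + a)] with t ht
    simp only [ρ]
    rw [Nat.le_div_iff_mul_le hn]
    omega
  obtain ⟨w, -, hw⟩ := isCompact_univ.ultrafilter_le_nhds (U.map (fun t => y (ρ t))) (by simp)
  have hw' : Tendsto (fun t => y (ρ t)) U (𝓝 w) := hw
  rw [mem_iUnion₂]
  refine ⟨i, hi, w, ?_, ?_⟩
  · rw [mem_omega_iff, mapClusterPt_iff_ultrafilter]
    exact ⟨U.map ρ, (Filter.map_mono hU).trans hρ, hw'⟩
  · have h1 : Tendsto (fun t => f^[i] (y (ρ t))) U (𝓝 (f^[i] w)) :=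
      ((hf.iterate i).tendsto w).comp hw'
    refine tendsto_nhds_unique (h1.congr' ?_) hUz
    filter_upwards [hres, hU (eventually_ge_atTop a)] with t ht hta
    simp only [y, ρ]
    rw [← iterate_mul, ← iterate_add_apply, ← iterate_add_apply]
    congr 2
    have := Nat.div_add_mod (t - a) n
    have hta : a ≤ t := hta
    omega

lemma inf_reals {S : Set ℝ} (hS : S.Infinite) (k : ℕ) :
    ∃ o : Fin k → ℝ, StrictMono o ∧ ∀ i, o i ∈ S := by
  obtain ⟨T, hT, hk⟩ := hS.exists_subset_card_eq k
  exact ⟨T.orderEmbOfFin hk, (T.orderEmbOfFin hk).strictMono,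
    fun i => hT (T.orderEmbOfFin_mem hk i)⟩

/-- infinite set: some edge contains infinitely many c-values -/
lemma edge_inf {X : Type*} [TopologicalSpace X] {m : ℕ} (e : Fin m → EdgeC X)
    (hF : {z | ∀ i, (e i).c z ∉ Ioo (0:ℝ) 1}.Finite) {S : Set X} (hS : S.Infinite) :
    ∃ i, (((e i).c '' S) ∩ Ioo 0 1).Infinite := by
  by_contra hcon
  push Not at hcon
  apply hS
  have : (⋃ i, (e i).σ '' (((e i).c '' S) ∩ Ioo 0 1)).Finite :=
    Set.finite_iUnion fun i => (hcon i).image _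
  apply (this.union hF).subset
  intro z hz
  by_cases h : ∀ i, (e i).c z ∉ Ioo (0:ℝ) 1
  · right; exact h
  · left
    push Not at h
    obtain ⟨i, hi⟩ := h
    rw [mem_iUnion]
    exact ⟨i, (e i).c z, ⟨⟨z, hz, rfl⟩, hi⟩, (e i).σc z hi⟩


lemma per_point {X : Type*} [TopologicalSpace X] (e : EdgeC X) {g : X → X} (hg : Continuous g)
    {y o1 o2 : X} (ho1 : o1 ∈ omegaLimitSet g y) (ho2 : o2 ∈ omegaLimitSet g y) {u v : ℝ}
    (hu : 0 ≤ u) (hv : v ≤ 1) (h1 : u < e.c o1) (h2 : e.c o1 < e.c o2) (h3 : e.c o2 < v) :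
    ∃ z, e.c z ∈ Ioo u v ∧ ∃ n, 1 ≤ n ∧ g^[n] z = z := by
  by_contra hcon
  push Not at hcon
  have hsub : ∀ s ∈ Ioo u v, s ∈ Ioo (0:ℝ) 1 :=
    fun s hs => ⟨lt_of_le_of_lt hu hs.1, lt_of_lt_of_le hs.2 hv⟩
  have hne : ∀ n, 1 ≤ n → ∀ s ∈ Ioo u v, e.c (g^[n] (e.σ s)) ≠ s := by
    intro n hn s hs h
    have hs' := hsub s hs
    apply hcon (e.σ s) (by rw [e.cσ s hs']; exact hs) n hn
    have := e.σc _ (by rw [h]; exact hs')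
    rw [h] at this
    exact this.symm
  have hcont : ∀ n, Continuous (fun s => e.c (g^[n] (e.σ s))) :=
    fun n => e.hc.comp ((hg.iterate n).comp e.hσ)
  have hdn : ∀ n, 1 ≤ n → (∃ s ∈ Ioo u v, e.c (g^[n] (e.σ s)) < s) →
      ∀ s ∈ Ioo u v, e.c (g^[n] (e.σ s)) < s := by
    rintro n hn ⟨s, hs, hlt⟩ s' hs'
    by_contra h
    push Not at h
    obtain ⟨w, hw, hw'⟩ := isPreconnected_Ioo.intermediate_value₂ hs hs'
      (hcont n).continuousOn continuousOn_id hlt.le h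
    exact hne n hn w hw hw'
  have hup : ∀ n, 1 ≤ n → (∃ s ∈ Ioo u v, s < e.c (g^[n] (e.σ s))) →
      ∀ s ∈ Ioo u v, s < e.c (g^[n] (e.σ s)) := by
    rintro n hn ⟨s, hs, hlt⟩ s' hs'
    by_contra h
    push Not at h
    obtain ⟨w, hw, hw'⟩ := isPreconnected_Ioo.intermediate_value₂ hs' hs
      (hcont n).continuousOn continuousOn_id h hlt.le
    exact hne n hn w hw hw'
  have hstep : ∀ n a z, e.c z ∈ Ioo u v → e.c (g^[n] z) ∈ Ioo u v →
      e.c (g^[a] (e.σ (e.c (g^[n] z)))) = e.c (g^[a + n] (e.σ (e.c z))) := by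
    intro n a z hz hz'
    rw [e.σc _ (hsub _ hz'), e.σc _ (hsub _ hz), iterate_add_apply]
  -- down
  have hD : ∀ n, 1 ≤ n → ∀ z, e.c z ∈ Ioo u v → e.c (g^[n] z) ∈ Ioo u v → e.c (g^[n] z) < e.c z →
      ∀ k, ∀ s ∈ Ioo u v, e.c (g^[(k+1) * n] (e.σ s)) < s := by
    intro n hn z hz hz' hlt k
    induction k with
    | zero =>
      apply hdn _ (by simpa using hn)
      refine ⟨_, hz, ?_⟩
      rw [e.σc _ (hsub _ hz)]
      simpa using hlt
    | succ k ih =>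
      apply hdn _ (Nat.mul_pos (by omega) hn)
      refine ⟨_, hz, ?_⟩
      have := ih _ hz'
      rw [hstep _ _ _ hz hz'] at this
      have e1 : (k + 1 + 1) * n = (k+1) * n + n := by ring
      rw [e1]
      exact this.trans hlt
  have hU : ∀ n, 1 ≤ n → ∀ z, e.c z ∈ Ioo u v → e.c (g^[n] z) ∈ Ioo u v → e.c z < e.c (g^[n] z) →
      ∀ k, ∀ s ∈ Ioo u v, s < e.c (g^[(k+1) * n] (e.σ s)) := by
    intro n hn z hz hz' hlt k
    induction k with
    | zero =>
      apply hup _ (by simpa using hn)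
      refine ⟨_, hz, ?_⟩
      rw [e.σc _ (hsub _ hz)]
      simpa using hlt
    | succ k ih =>
      apply hup _ (Nat.mul_pos (by omega) hn)
      refine ⟨_, hz, ?_⟩
      have := ih _ hz'
      rw [hstep _ _ _ hz hz'] at this
      have e1 : (k + 1 + 1) * n = (k+1) * n + n := by ring
      rw [e1]
      exact hlt.trans this
  set mid := (e.c o1 + e.c o2) / 2 with hmid
  have hO1 : IsOpen (e.c ⁻¹' Ioo u mid) := isOpen_Ioo.preimage e.hc
  have hO2 : IsOpen (e.c ⁻¹' Ioo mid v) := isOpen_Ioo.preimage e.hc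
  have m1 : o1 ∈ e.c ⁻¹' Ioo u mid := ⟨h1, by rw [hmid]; linarith⟩
  have m2 : o2 ∈ e.c ⁻¹' Ioo mid v := ⟨by rw [hmid]; linarith, h3⟩
  obtain ⟨t1, _, ht1⟩ := omega_visit ho1 hO1 m1 0
  obtain ⟨t2, h12, ht2⟩ := omega_visit ho2 hO2 m2 (t1+1)
  obtain ⟨t3, h23, ht3⟩ := omega_visit ho1 hO1 m1 (t2+1)
  have a1 : e.c (g^[t1] y) ∈ Ioo u v := ⟨ht1.1, by linarith [ht1.2, m2.1, m2.2]⟩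
  have a2 : e.c (g^[t2] y) ∈ Ioo u v := ⟨by linarith [ht2.1, m1.1, m1.2], ht2.2⟩
  have a3 : e.c (g^[t3] y) ∈ Ioo u v := ⟨ht3.1, by linarith [ht3.2, m2.1, m2.2]⟩
  have b12 : g^[t2 - t1] (g^[t1] y) = g^[t2] y := by
    rw [← iterate_add_apply, Nat.sub_add_cancel (by omega)]
  have b23 : g^[t3 - t2] (g^[t2] y) = g^[t3] y := by
    rw [← iterate_add_apply, Nat.sub_add_cancel (by omega)]
  have hu' := hU (t2 - t1) (by omega) (g^[t1] y) a1 (by rw [b12]; exact a2)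
    (by rw [b12]; exact ht1.2.trans ht2.1) (t3 - t2 - 1) _ a1
  have hd' := hD (t3 - t2) (by omega) (g^[t2] y) a2 (by rw [b23]; exact a3)
    (by rw [b23]; exact ht3.2.trans ht2.1) (t2 - t1 - 1) _ a1
  have e1 : (t3 - t2 - 1 + 1) * (t2 - t1) = (t2 - t1 - 1 + 1) * (t3 - t2) := by
    rw [Nat.sub_add_cancel (by omega), Nat.sub_add_cancel (by omega), Nat.mul_comm]
  rw [e1] at hu'
  exact lt_asymm hu' hd'


lemma iterate_fix {X : Type*} {g : X → X} {n : ℕ} {z : X} (h : g^[n] z = z) (k : ℕ) :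
    g^[n * k] z = z := by
  rw [iterate_mul]; exact iterate_fixed h k

lemma a1_side {X : Type*} [MetricSpace X] (e : EdgeC X) {g : X → X} (hg : Continuous g)
    {P : Set X} (hP : MapsTo g P P) {y : X} {k : ℕ} (hk : 1 ≤ k)
    (H : ∀ Q : Set X, Q ⊆ P → IsPreconnected Q → MapsTo g^[k] Q Q →
      (∃ t, g^[t] y ∈ Q) → ∀ j, ∃ s, s ≡ j [MOD k] ∧ g^[s] y ∈ Q)
    {p q r w0 w1 w2 : X} (hp : g^[k] p = p) (hq : g^[k] q = q) (hr : g^[k] r = r)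
    {α β : ℝ} (hrc : e.c r ∈ Ioo α β) (hpα : e.c p < α) (hqβ : β < e.c q) (hp0 : 0 < e.c p)
    (hq1 : e.c q < 1) (hw0 : w0 ∈ omegaLimitSet g y) (hw1 : w1 ∈ omegaLimitSet g y)
    (hw2 : w2 ∈ omegaLimitSet g y) (h0 : e.c w0 < e.c p) (h1 : e.c w1 ∈ Ioo α β)
    (h2 : e.c q < e.c w2) (hVP : e.σ '' Icc α β ⊆ P) :
    ∃ J, ∀ j, J ≤ j → e.σ '' Icc (e.c p) (e.c q) ⊆ g^[k * j] '' (e.σ '' Icc α β) := by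
  have hVpre : IsPreconnected (e.σ '' Icc α β) :=
    isPreconnected_Icc.image _ e.hσ.continuousOn
  have h01 : ∀ s ∈ Icc (e.c p) (e.c q), s ∈ Ioo (0:ℝ) 1 :=
    fun s hs => ⟨hp0.trans_le hs.1, hs.2.trans_lt hq1⟩
  have hαβ : α < β := hrc.1.trans hrc.2
  set V := e.σ '' Icc α β with hV
  have hrV : r ∈ V := ⟨e.c r, ⟨hrc.1.le, hrc.2.le⟩, e.σc r (h01 _ ⟨by linarith [hrc.1], by linarith [hrc.2]⟩)⟩
  set W : Set X := ⋃ j : ℕ, g^[k * j] '' V with hW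
  have hPit : ∀ n, MapsTo g^[n] P P := fun n => hP.iterate n
  have hWP : W ⊆ P := by
    apply iUnion_subset
    rintro j _ ⟨v, hv, rfl⟩
    exact hPit _ (hVP hv)
  have hWpre : IsPreconnected W := by
    apply isPreconnected_iUnion
    · exact ⟨r, mem_iInter.2 fun j => ⟨r, hrV, iterate_fix hr j⟩⟩
    · intro j
      exact hVpre.image _ (hg.iterate _).continuousOn
  have hWk : MapsTo g^[k] W W := by
    intro z hz
    obtain ⟨j, v, hv, rfl⟩ := mem_iUnion.1 hz
    refine mem_iUnion.2 ⟨j+1, v, hv, ?_⟩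
    rw [← iterate_add_apply]; congr 2; ring
  have hWv : ∃ t, g^[t] y ∈ W := by
    obtain ⟨t, _, ht⟩ := omega_visit hw1 (isOpen_Ioo.preimage e.hc) h1 0
    have ht : e.c (g^[t] y) ∈ Ioo α β := ht
    refine ⟨t, mem_iUnion.2 ⟨0, g^[t] y, ⟨e.c (g^[t] y), ⟨ht.1.le, ht.2.le⟩, e.σc _ (h01 _ ⟨by linarith [ht.1], by linarith [ht.2]⟩)⟩, ?_⟩⟩
    simp
  have hall : ∃ T, ∀ s, T ≤ s → g^[s] y ∈ W := by
    choose s hs hsW using H W hWP hWpre hWk hWv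
    refine ⟨∑ j ∈ Finset.range k, s j, fun t ht => ?_⟩
    have hj : t % k < k := Nat.mod_lt _ hk
    have hle : s (t % k) ≤ t :=
      (Finset.single_le_sum (f := s) (fun _ _ => Nat.zero_le _) (Finset.mem_range.2 hj)).trans ht
    have hmod : s (t % k) ≡ t [MOD k] := (hs (t % k)).trans (Nat.mod_modEq t k)
    obtain ⟨d, hd⟩ := (Nat.modEq_iff_dvd' hle).1 hmod
    have : t = k * d + s (t % k) := by omega
    rw [this, iterate_add_apply, iterate_mul]
    exact hWk.iterate d (hsW _)
  obtain ⟨T, hT⟩ := hall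
  obtain ⟨t0, ht0, hv0⟩ := omega_visit hw0 (isOpen_Iio.preimage e.hc) (show w0 ∈ e.c ⁻¹' Iio (e.c p) from h0) T
  obtain ⟨t2, ht2, hv2⟩ := omega_visit hw2 (isOpen_Ioi.preimage e.hc) (show w2 ∈ e.c ⁻¹' Ioi (e.c q) from h2) T
  have hv0 : e.c (g^[t0] y) < e.c p := hv0
  have hv2 : e.c q < e.c (g^[t2] y) := hv2
  have hpq : e.c p < e.c q := by linarith
  have pI : e.c p ∈ Ioo (0:ℝ) 1 := h01 _ ⟨le_rfl, hpq.le⟩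
  have qI : e.c q ∈ Ioo (0:ℝ) 1 := h01 _ ⟨hpq.le, le_rfl⟩
  have hpW : p ∈ W := by
    rw [← e.σc p pI]
    exact e.cut hWpre (hT t0 ht0) (hT t2 ht2) pI hv0.le (by linarith)
  have hqW : q ∈ W := by
    rw [← e.σc q qI]
    exact e.cut hWpre (hT t0 ht0) (hT t2 ht2) qI (by linarith) hv2.le
  obtain ⟨jp, vp, hvp, hjp⟩ := mem_iUnion.1 hpW
  obtain ⟨jq, vq, hvq, hjq⟩ := mem_iUnion.1 hqW
  refine ⟨max jp jq, fun j hj => ?_⟩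
  have hpj : p ∈ g^[k * j] '' V := by
    refine ⟨vp, hvp, ?_⟩
    obtain ⟨d, rfl⟩ := Nat.exists_eq_add_of_le ((le_max_left _ _).trans hj)
    rw [show k * (jp + d) = k * d + k * jp by ring, iterate_add_apply, hjp, iterate_fix hp]
  have hqj : q ∈ g^[k * j] '' V := by
    refine ⟨vq, hvq, ?_⟩
    obtain ⟨d, rfl⟩ := Nat.exists_eq_add_of_le ((le_max_right _ _).trans hj)
    rw [show k * (jq + d) = k * d + k * jq by ring, iterate_add_apply, hjq, iterate_fix hq]
  rintro _ ⟨s, hs, rfl⟩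
  exact e.cut (hVpre.image _ (hg.iterate _).continuousOn) hpj hqj (h01 s hs) hs.1 hs.2

lemma a1_horseshoe {X : Type*} [MetricSpace X] {m : ℕ} (e : Fin m → EdgeC X)
    (hF : {z | ∀ i, (e i).c z ∉ Ioo (0:ℝ) 1}.Finite) {g : X → X} (hg : Continuous g)
    (hN : NoHS g) {P : Set X} (hPc : IsPreconnected P) (hP : MapsTo g P P) {y : X} (hy : y ∈ P)
    (hΩ : (omegaLimitSet g y).Infinite) :
    ∃ k, 1 ≤ k ∧ ∃ Q ⊆ P, IsPreconnected Q ∧ MapsTo g^[k] Q Q ∧ (∃ t, g^[t] y ∈ Q) ∧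
      ∃ j, ∀ s, s ≡ j [MOD k] → g^[s] y ∉ Q := by
  by_contra hcon
  have H : ∀ k, 1 ≤ k → ∀ Q : Set X, Q ⊆ P → IsPreconnected Q → MapsTo g^[k] Q Q →
      (∃ t, g^[t] y ∈ Q) → ∀ j, ∃ s, s ≡ j [MOD k] ∧ g^[s] y ∈ Q := by
    intro k hk Q h1 h2 h3 h4 j
    by_contra hc
    push Not at hc
    exact hcon ⟨k, hk, Q, h1, h2, h3, h4, j, hc⟩
  obtain ⟨i, hi⟩ := edge_inf e hF hΩ
  set e := e i
  obtain ⟨o, hmono, ho⟩ := inf_reals hi 14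
  have ho1 : ∀ j, ∃ w ∈ omegaLimitSet g y, e.c w = o j := fun j => (ho j).1
  choose w hw hwo using ho1
  have hoI : ∀ j, o j ∈ Ioo (0:ℝ) 1 := fun j => (ho j).2
  have lt : ∀ a b : Fin 14, a < b → o a < o b := fun a b h => hmono h
  have per : ∀ a b c d : Fin 14, a < b → b < c → c < d →
      ∃ z, e.c z ∈ Ioo (o a) (o d) ∧ ∃ n, 1 ≤ n ∧ g^[n] z = z := by
    intro a b c d h1 h2 h3
    apply per_point e hg (hw b) (hw c) (hoI a).1.le (hoI d).2.le
    · rw [hwo]; exact lt _ _ h1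
    · rw [hwo, hwo]; exact lt _ _ h2
    · rw [hwo]; exact lt _ _ h3
  obtain ⟨p, hp, np, hnp, hp'⟩ := per 0 1 2 3 (by decide) (by decide) (by decide)
  obtain ⟨r1, hr1, nr1, hnr1, hr1'⟩ := per 3 4 5 6 (by decide) (by decide) (by decide)
  obtain ⟨r2, hr2, nr2, hnr2, hr2'⟩ := per 7 8 9 10 (by decide) (by decide) (by decide)
  obtain ⟨q, hq, nq, hnq, hq'⟩ := per 10 11 12 13 (by decide) (by decide) (by decide)
  set k := np * nr1 * nr2 * nq with hkdef
  have hk : 1 ≤ k := Nat.mul_pos (Nat.mul_pos (Nat.mul_pos hnp hnr1) hnr2) hnq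
  have kp : g^[k] p = p := by
    rw [hkdef, show np * nr1 * nr2 * nq = np * (nr1 * nr2 * nq) by ring]; exact iterate_fix hp' _
  have kr1 : g^[k] r1 = r1 := by
    rw [hkdef, show np * nr1 * nr2 * nq = nr1 * (np * nr2 * nq) by ring]; exact iterate_fix hr1' _
  have kr2 : g^[k] r2 = r2 := by
    rw [hkdef, show np * nr1 * nr2 * nq = nr2 * (np * nr1 * nq) by ring]; exact iterate_fix hr2' _
  have kq : g^[k] q = q := by
    rw [hkdef, show np * nr1 * nr2 * nq = nq * (np * nr1 * nr2) by ring]; exact iterate_fix hq' _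
  have hyP : ∀ t, g^[t] y ∈ P := fun t => hP.iterate t hy
  have l36 := lt 3 6 (by decide)
  have l67 := lt 6 7 (by decide)
  have l710 := lt 7 10 (by decide)
  have hσP : ∀ s ∈ Icc (o 3) (o 10), e.σ s ∈ P := by
    intro s hs
    obtain ⟨t0, _, hv0⟩ := omega_visit (hw 0) (isOpen_Iio.preimage e.hc)
      (show w 0 ∈ e.c ⁻¹' Iio (o 3) by
        show e.c (w 0) < o 3
        rw [hwo]; exact lt _ _ (by decide)) 0
    obtain ⟨t2, _, hv2⟩ := omega_visit (hw 13) (isOpen_Ioi.preimage e.hc)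
      (show w 13 ∈ e.c ⁻¹' Ioi (o 10) by
        show o 10 < e.c (w 13)
        rw [hwo]; exact lt _ _ (by decide)) 0
    have hv0 : e.c (g^[t0] y) < o 3 := hv0
    have hv2 : o 10 < e.c (g^[t2] y) := hv2
    exact e.cut hPc (hyP t0) (hyP t2) ⟨(hoI 3).1.trans_le hs.1, hs.2.trans_lt (hoI 10).2⟩
      (by linarith [hs.1]) (by linarith [hs.2])
  obtain ⟨J1, hJ1⟩ := a1_side e hg hP hk (H k hk) kp kq kr1 hr1 hp.2 (by linarith [hq.1])
    (by linarith [hp.1, (hoI 0).1]) (by linarith [hq.2, (hoI 13).2]) (hw 0) (hw 4) (hw 13)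
    (by rw [hwo]; exact hp.1)
    (by rw [hwo]; exact ⟨lt _ _ (by decide), lt _ _ (by decide)⟩) (by rw [hwo]; exact hq.2)
    (by rintro _ ⟨s, hs, rfl⟩; exact hσP s ⟨hs.1, by linarith [hs.2]⟩)
  obtain ⟨J2, hJ2⟩ := a1_side e hg hP hk (H k hk) kp kq kr2 hr2 (by linarith [hp.2]) hq.1
    (by linarith [hp.1, (hoI 0).1]) (by linarith [hq.2, (hoI 13).2]) (hw 0) (hw 8) (hw 13)
    (by rw [hwo]; exact hp.1)
    (by rw [hwo]; exact ⟨lt _ _ (by decide), lt _ _ (by decide)⟩) (by rw [hwo]; exact hq.2)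
    (by rintro _ ⟨s, hs, rfl⟩; exact hσP s ⟨by linarith [hs.1], hs.2⟩)
  set J := J1 + J2 + 1
  have hsub : e.σ '' Icc (o 3) (o 6) ∪ e.σ '' Icc (o 7) (o 10) ⊆ e.σ '' Icc (e.c p) (e.c q) := by
    rw [← image_union]
    apply image_mono
    rintro s (hs | hs)
    · exact ⟨by linarith [hs.1, hp.2], by linarith [hs.2, hq.1]⟩
    · exact ⟨by linarith [hs.1, hp.2], by linarith [hs.2, hq.1]⟩
  refine hN (k * J) (Nat.mul_pos hk (by omega)) _ _
    (isCompact_Icc.image e.hσ).isClosed (isCompact_Icc.image e.hσ).isClosed ?_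
    ⟨e.σ (o 3), o 3, ⟨le_rfl, l36.le⟩, rfl⟩
    (hsub.trans (hJ1 J (by omega))) (hsub.trans (hJ2 J (by omega)))
  rw [Set.disjoint_left]
  rintro _ ⟨s, hs, rfl⟩ ⟨s', hs', hss⟩
  have a1 : e.c (e.σ s) = s := e.cσ s ⟨(hoI 3).1.trans_le hs.1, by linarith [hs.2, (hoI 6).2]⟩
  have a2 : e.c (e.σ s') = s' := e.cσ s' ⟨(hoI 7).1.trans_le hs'.1, by linarith [hs'.2, (hoI 10).2]⟩
  rw [hss, a1] at a2
  linarith [hs.2, hs'.1]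


lemma compC {X : Type*} [TopologicalSpace X] {G : X → X} (hG : Continuous G) {Z : Set X}
    (hZ : IsPreconnected Z) {z0 : X} (hz0 : z0 ∈ Z) {a : ℕ} (ha : 1 ≤ a)
    (hz : ∃ w ∈ Z, G^[a] w ∈ Z) :
    ∃ (P' : Set X) (n : ℕ), 1 ≤ n ∧ Z ⊆ P' ∧ P' ⊆ (⋃ j : ℕ, G^[j] '' Z) ∧ IsPreconnected P' ∧
      MapsTo G^[n] P' P' ∧ (∀ i, ∀ w ∈ P', G^[i] w ∈ P' → n ∣ i) ∧
      ∀ C ⊆ (⋃ j : ℕ, G^[j] '' Z), IsPreconnected C → (C ∩ P').Nonempty → C ⊆ P' := by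
  classical
  set O : Set X := ⋃ j : ℕ, G^[j] '' Z with hO
  set P' := connectedComponentIn O z0 with hP'
  have hZO : Z ⊆ O := fun w hw => mem_iUnion.2 ⟨0, w, hw, rfl⟩
  have hZP : Z ⊆ P' := hZ.subset_connectedComponentIn hz0 hZO
  have hPO : P' ⊆ O := connectedComponentIn_subset _ _
  have hPc : IsPreconnected P' := isPreconnected_connectedComponentIn
  have hmax : ∀ C ⊆ O, IsPreconnected C → (C ∩ P').Nonempty → C ⊆ P' := by
    rintro C hC hCc ⟨w, hwC, hwP⟩
    have := hCc.subset_connectedComponentIn hwC hC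
    rwa [← connectedComponentIn_eq hwP] at this
  have hOm : ∀ i, MapsTo G^[i] O O := by
    intro i w hw
    obtain ⟨j, v, hv, rfl⟩ := mem_iUnion.1 hw
    exact mem_iUnion.2 ⟨i + j, v, hv, iterate_add_apply _ _ _ _⟩
  have hS : ∀ i, ∀ w ∈ P', G^[i] w ∈ P' → MapsTo G^[i] P' P' := by
    intro i w hw hw'
    rw [mapsTo_iff_image_subset]
    apply hmax
    · rintro _ ⟨v, hv, rfl⟩
      exact hOm i (hPO hv)
    · exact hPc.image _ (hG.iterate i).continuousOn
    · exact ⟨_, ⟨w, hw, rfl⟩, hw'⟩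
  have hex : ∃ n, 1 ≤ n ∧ ∃ w ∈ P', G^[n] w ∈ P' := by
    obtain ⟨w, hw, hw'⟩ := hz
    exact ⟨a, ha, w, hZP hw, hZP hw'⟩
  set n := Nat.find hex with hn
  obtain ⟨hn1, w, hw, hw'⟩ := Nat.find_spec hex
  have hnP : MapsTo G^[n] P' P' := hS n w hw hw'
  refine ⟨P', n, hn1, hZP, hPO, hPc, hnP, ?_, hmax⟩
  intro i v hv hv'
  by_contra hdvd
  have hpos : 1 ≤ i % n := Nat.pos_of_ne_zero fun h => hdvd (Nat.dvd_of_mod_eq_zero h)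
  have hlt : i % n < n := Nat.mod_lt _ hn1
  refine Nat.find_min hex hlt ⟨hpos, G^[n * (i / n)] v, ?_, ?_⟩
  · rw [iterate_mul]
    exact hnP.iterate _ hv
  · rw [← iterate_add_apply, Nat.mod_add_div]
    exact hv'

lemma claimA {X : Type*} [MetricSpace X] {m : ℕ} (e : Fin m → EdgeC X)
    (hF : {z | ∀ i, (e i).c z ∉ Ioo (0:ℝ) 1}.Finite) {g : X → X} (hg : Continuous g)
    (hN : NoHS g) {P : Set X} (hPc : IsPreconnected P) (hP : MapsTo g P P) {y : X} (hy : y ∈ P)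
    (hΩ : (omegaLimitSet g y).Infinite) :
    ∃ k, 2 ≤ k ∧ ∃ P' ⊆ P, IsPreconnected P' ∧ MapsTo g^[k] P' P' ∧ (∃ t, g^[t] y ∈ P') ∧
      ∀ s t, g^[s] y ∈ P' → g^[t] y ∈ P' → s ≡ t [MOD k] := by
  classical
  obtain ⟨k, hk, Q, hQP, hQc, hQk, ⟨t0, ht0⟩, j, hj⟩ := a1_horseshoe e hF hg hN hPc hP hy hΩ
  have hQd : ∀ d, MapsTo g^[k * d] Q Q := fun d => by rw [iterate_mul]; exact hQk.iterate d
  have hyP : ∀ t, g^[t] y ∈ P := fun t => hP.iterate t hy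
  let R : ℕ → Prop := fun t => ∃ s, s ≡ t [MOD k] ∧ g^[s] y ∈ Q
  have Rcongr : ∀ s t, s ≡ t [MOD k] → R s → R t := by
    rintro s t hst ⟨u, hu, huQ⟩
    exact ⟨u, hu.trans hst, huQ⟩
  have Rlarge : ∃ T, ∀ t, T ≤ t → R t → g^[t] y ∈ Q := by
    have : ∀ r, ∃ s, R r → s ≡ r [MOD k] ∧ g^[s] y ∈ Q := by
      intro r
      by_cases h : R r
      · obtain ⟨s, hs⟩ := h
        exact ⟨s, fun _ => hs⟩
      · exact ⟨0, fun h' => absurd h' h⟩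
    choose s hs using this
    refine ⟨∑ j ∈ Finset.range k, s j, fun t ht htR => ?_⟩
    have hj : t % k < k := Nat.mod_lt _ hk
    have hle : s (t % k) ≤ t :=
      (Finset.single_le_sum (f := s) (fun _ _ => Nat.zero_le _) (Finset.mem_range.2 hj)).trans ht
    obtain ⟨h1, h2⟩ := hs (t % k) (Rcongr _ _ (Nat.mod_modEq t k).symm htR)
    have hmod : s (t % k) ≡ t [MOD k] := h1.trans (Nat.mod_modEq t k)
    obtain ⟨d, hd⟩ := (Nat.modEq_iff_dvd' hle).1 hmod
    have : t = k * d + s (t % k) := by omega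
    rw [this, iterate_add_apply]
    exact hQd d h2
  obtain ⟨T, hT⟩ := Rlarge
  have Rt0 : R t0 := ⟨t0, rfl, ht0⟩
  have Rj : ¬ R j := by
    rintro ⟨s, hs, hsQ⟩
    exact hj s hs hsQ
  let H : ℕ → Prop := fun d => ∀ t, R t → R (t + d)
  have Hadd : ∀ a b, H a → H b → H (a + b) := by
    intro a b ha hb t ht
    rw [← add_assoc]
    exact hb _ (ha t ht)
  have Hmul : ∀ a, H a → ∀ b, H (b * a) := by
    intro a ha b
    induction b with
    | zero => intro t ht; simpa using ht
    | succ b ih => rw [Nat.succ_mul]; exact Hadd _ _ ih ha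
  have Hcongr : ∀ s t, s ≡ t [MOD k] → H s → H t := by
    intro s t hst h u hu
    exact Rcongr _ _ (hst.add_left u) (h u hu)
  have Hk : H k := by
    intro t ht
    exact Rcongr _ _ (by simp [Nat.ModEq]) ht
  have hex : ∃ M, 1 ≤ M ∧ H M := ⟨k, hk, Hk⟩
  set M := Nat.find hex with hM
  obtain ⟨hM1, HM⟩ : 1 ≤ M ∧ H M := Nat.find_spec hex
  have Hdvd : ∀ d, H d → M ∣ d := by
    intro d hd
    by_contra hdvd
    have hpos : 1 ≤ d % M := Nat.pos_of_ne_zero fun h => hdvd (Nat.dvd_of_mod_eq_zero h)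
    have hlt : d % M < M := Nat.mod_lt _ hM1
    refine Nat.find_min hex hlt ⟨hpos, ?_⟩
    have h1 : H (d + ((k-1) * (d / M)) * M) := Hadd _ _ hd (Hmul _ HM _)
    refine Hcongr _ _ ?_ h1
    obtain ⟨k', rfl⟩ : ∃ k', k = k' + 1 := ⟨k - 1, by omega⟩
    have e1 := Nat.mod_add_div d M
    have : d + ((k' + 1 - 1) * (d / M)) * M = d % M + (k'+1) * (M * (d / M)) := by
      conv_lhs => rw [← e1]
      have e2 : (d % M + M * (d / M)) / M = d / M := by rw [e1]
      rw [e2]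
      simp only [Nat.add_sub_cancel]
      ring
    rw [this]
    simp [Nat.ModEq]
  have hM2 : 2 ≤ M := by
    by_contra h
    have hM' : M = 1 := by omega
    apply Rj
    have H1 : H (j + (k - 1) * t0) := by
      have := Hmul _ HM (j + (k-1) * t0)
      rw [hM', mul_one] at this
      exact this
    refine Rcongr _ _ ?_ (H1 t0 Rt0)
    obtain ⟨k', rfl⟩ : ∃ k', k = k' + 1 := ⟨k - 1, by omega⟩
    have : t0 + (j + (k' + 1 - 1) * t0) = j + (k'+1) * t0 := by
      simp only [Nat.add_sub_cancel]; ring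
    rw [this]; simp [Nat.ModEq]
  -- infinite many times
  have hinj := orbit_inj hΩ
  have hinf : ((fun u : ℕ => g^[M * (T + k + u)] y) '' univ).Infinite := by
    apply infinite_univ.image
    intro u _ v _ huv
    have := hinj huv
    have := Nat.eq_of_mul_eq_mul_left hM1 this
    omega
  obtain ⟨i, hi⟩ := edge_inf e hF hinf
  obtain ⟨o, hmono, ho⟩ := inf_reals hi 2
  have hlt : o 0 < o 1 := hmono (by decide)
  obtain ⟨⟨_, ⟨u0, -, rfl⟩, hu0⟩, hI0⟩ := ho 0
  obtain ⟨⟨_, ⟨u1, -, rfl⟩, hu1⟩, hI1⟩ := ho 1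
  set E := e i
  simp only at hu0 hu1
  set τ0 := M * (T + k + u0) with hτ0
  set τ1 := M * (T + k + u1) with hτ1
  have hTM : ∀ u, T + k ≤ M * (T + k + u) := fun u => by
    calc T + k ≤ 1 * (T + k + u) := by omega
      _ ≤ _ := Nat.mul_le_mul_right _ hM1
  have hC : ∀ u r, r < k → R r → g^[M * (T + k + u)] y ∈ g^[k - r] '' Q := by
    intro u r hr hRr
    have := hTM u
    refine ⟨g^[M * (T + k + u) - (k - r)] y, ?_, ?_⟩
    · apply hT _ (by omega)
      have h1 := (Hmul _ HM (T + k + u)) r hRr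
      rw [Nat.mul_comm] at h1
      refine Rcongr _ _ ?_ h1
      have : r + M * (T + k + u) = (M * (T + k + u) - (k - r)) + k := by omega
      rw [this]; simp [Nat.ModEq]
    · rw [← iterate_add_apply]; congr 2; omega
  set Z := E.σ '' Icc (o 0) (o 1) with hZ
  have hsub : ∀ s ∈ Icc (o 0) (o 1), s ∈ Ioo (0:ℝ) 1 :=
    fun s hs => ⟨hI0.1.trans_le hs.1, hs.2.trans_lt hI1.2⟩
  have hZc : IsPreconnected Z := isPreconnected_Icc.image _ E.hσ.continuousOn
  have hZQ : ∀ r, r < k → R r → Z ⊆ g^[k - r] '' Q := by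
    rintro r hr hRr _ ⟨s, hs, rfl⟩
    exact E.cut (hQc.image _ (hg.iterate _).continuousOn) (hC u0 r hr hRr) (hC u1 r hr hRr)
      (hsub s hs) (by rw [hu0]; exact hs.1) (by rw [hu1]; exact hs.2)
  have hZP : Z ⊆ P := by
    rintro _ ⟨s, hs, rfl⟩
    exact E.cut hPc (hyP τ0) (hyP τ1)
      (hsub s hs) (by rw [hu0]; exact hs.1) (by rw [hu1]; exact hs.2)
  have z0 : g^[τ0] y ∈ Z := ⟨o 0, ⟨le_rfl, hlt.le⟩, by rw [← hu0]; exact E.σc _ (by rw [hu0]; exact hI0)⟩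
  have z1 : g^[τ1] y ∈ Z := ⟨o 1, ⟨hlt.le, le_rfl⟩, by rw [← hu1]; exact E.σc _ (by rw [hu1]; exact hI1)⟩
  have hne : u0 ≠ u1 := by
    intro h
    rw [hτ0, h, ← hτ1] at hu0
    rw [hu0] at hu1
    exact hlt.ne hu1
  have hret : ∃ a, 1 ≤ a ∧ ∃ w ∈ Z, (g^[M])^[a] w ∈ Z := by
    rcases lt_or_gt_of_ne hne with h | h
    · refine ⟨u1 - u0, by omega, _, z0, ?_⟩
      rw [← iterate_mul, ← iterate_add_apply]
      have : M * (u1 - u0) + τ0 = τ1 := by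
        rw [hτ0, hτ1, ← Nat.mul_add]; congr 1; omega
      rwa [this]
    · refine ⟨u0 - u1, by omega, _, z1, ?_⟩
      rw [← iterate_mul, ← iterate_add_apply]
      have : M * (u0 - u1) + τ1 = τ0 := by
        rw [hτ0, hτ1, ← Nat.mul_add]; congr 1; omega
      rwa [this]
  obtain ⟨a, ha, hret⟩ := hret
  obtain ⟨P', n, hn, hZP', hP'O, hP'c, hP'm, hP'd, -⟩ := compC (hg.iterate M) hZc z0 ha hret
  have hMd : ∀ s, g^[s] y ∈ P' → M ∣ s := by
    intro s hs
    obtain ⟨j', z, hz, hzs⟩ := mem_iUnion.1 (hP'O hs)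
    rw [← iterate_mul] at hzs
    have hH : H (s + (k - 1) * (j' * M)) := by
      intro t ht
      have hr : t % k < k := Nat.mod_lt _ hk
      have hRr : R (t % k) := Rcongr _ _ (Nat.mod_modEq t k).symm ht
      obtain ⟨q, hq, hqz⟩ := hZQ _ hr hRr hz
      refine Rcongr (t % k + (s + (k - 1) * (j' * M))) _ ((Nat.mod_modEq t k).add_right _) ?_
      refine ⟨_, rfl, ?_⟩
      have e1 : t % k + (s + (k - 1) * (j' * M)) = (t % k + (k-1) * (j' * M)) + s := by ring
      rw [e1, iterate_add_apply, ← hzs, ← hqz, ← iterate_add_apply, ← iterate_add_apply]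
      have e2 : t % k + (k-1) * (j' * M) + M * j' + (k - t % k) = k * (1 + j' * M) := by
        obtain ⟨k', rfl⟩ : ∃ k', k = k' + 1 := ⟨k - 1, by omega⟩
        have : (k' + 1) * (1 + j' * M) = (k'+1) + k' * (j' * M) + M * j' := by ring
        rw [this]
        simp only [Nat.add_sub_cancel]
        omega
      rw [e2]
      exact hQd _ hq
    have := Hdvd _ hH
    exact (Nat.dvd_add_left (Dvd.intro_left ((k-1) * j') (by ring))).1 this
  have key : ∀ s t, s ≤ t → g^[s] y ∈ P' → g^[t] y ∈ P' → s ≡ t [MOD M * n] := by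
    intro s t hst hs ht
    obtain ⟨s', rfl⟩ := hMd s hs
    obtain ⟨t', rfl⟩ := hMd t ht
    have hle : s' ≤ t' := Nat.le_of_mul_le_mul_left hst hM1
    have := hP'd (t' - s') _ hs (by
      rw [← iterate_mul, ← iterate_add_apply, ← Nat.mul_add, Nat.sub_add_cancel hle]; exact ht)
    rw [Nat.modEq_iff_dvd' hst, ← Nat.mul_sub]
    exact Nat.mul_dvd_mul_left _ this
  refine ⟨M * n, ?_, P', ?_, hP'c, ?_, ⟨τ0, hZP' z0⟩, ?_⟩
  · calc 2 = 2 * 1 := rfl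
      _ ≤ M * n := Nat.mul_le_mul hM2 hn
  · intro w hw
    obtain ⟨j', z, hz, rfl⟩ := mem_iUnion.1 (hP'O hw)
    rw [← iterate_mul]
    exact hP.iterate _ (hZP hz)
  · rw [iterate_mul]; exact hP'm
  · intro s t hs ht
    rcases le_total s t with h | h
    · exact key s t h hs ht
    · exact (key t s h ht hs).symm


lemma NoHS.pow {X : Type*} [TopologicalSpace X] {f : X → X} (h : NoHS f) {k : ℕ} (hk : 1 ≤ k) :
    NoHS f^[k] := by
  intro n hn A B hA hB hAB hne h1 h2
  rw [← iterate_mul] at h1 h2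
  exact h (k * n) (Nat.mul_pos hk hn) A B hA hB hAB hne h1 h2

lemma iter_exact {X : Type*} [MetricSpace X] [CompactSpace X] [PreconnectedSpace X] {m : ℕ}
    (e : Fin m → EdgeC X)
    (hF : {z | ∀ i, (e i).c z ∉ Ioo (0:ℝ) 1}.Finite) {f : X → X} (hf : Continuous f)
    (hN : NoHS f) {x : X} (hΩ : (omegaLimitSet f x).Infinite) (K : ℕ) :
    ∃ n, K + 1 ≤ n ∧ ∃ P : Set X, IsPreconnected P ∧ MapsTo f^[n] P P ∧ (∃ a, f^[a] x ∈ P) ∧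
      ∀ s t, f^[s] x ∈ P → f^[t] x ∈ P → s ≡ t [MOD n] := by
  induction K with
  | zero =>
    refine ⟨1, le_rfl, univ, isPreconnected_univ, mapsTo_univ _ _, ⟨0, trivial⟩, ?_⟩
    intro s t _ _
    exact Nat.modEq_one
  | succ K ih =>
    obtain ⟨n, hn, P, hPc, hPn, ⟨a, ha⟩, hex⟩ := ih
    obtain ⟨k, hk, P', hP'P, hP'c, hP'k, ⟨t0, ht0⟩, hP'e⟩ :=
      claimA e hF (hf.iterate n) (hN.pow (by omega)) hPc hPn ha
        (omega_pow_infinite hf hΩ n a (by omega))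
    refine ⟨n * k, ?_, P', hP'c, ?_, ⟨n * t0 + a, ?_⟩, ?_⟩
    · calc K + 1 + 1 ≤ n * 2 := by omega
        _ ≤ n * k := Nat.mul_le_mul_left _ hk
    · rw [iterate_mul]; exact hP'k
    · rw [← iterate_mul, ← iterate_add_apply] at ht0
      exact ht0
    · have hrep : ∀ s, f^[s] x ∈ P' → ∃ s', (f^[n])^[s'] (f^[a] x) ∈ P' ∧
          s ≡ n * s' + a [MOD n * k] := by
        intro s hs
        have h1 : f^[s + n * k * a] x ∈ P' := by
          rw [Nat.add_comm, iterate_add_apply, iterate_mul, iterate_mul]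
          exact hP'k.iterate a hs
        have h2 := hex _ _ ha (hP'P h1)
        have hle : a ≤ s + n * k * a := by
          have : 1 * a ≤ n * k * a := Nat.mul_le_mul_right _ (Nat.mul_pos (by omega) (by omega))
          omega
        obtain ⟨s', hs'⟩ := (Nat.modEq_iff_dvd' hle).1 h2
        have e1 : s + n * k * a = n * s' + a := by omega
        refine ⟨s', ?_, ?_⟩
        · rw [← iterate_mul, ← iterate_add_apply, ← e1]; exact h1
        · rw [← e1]; simp [Nat.ModEq]
      intro s t hs ht
      obtain ⟨s', hs', es⟩ := hrep s hs
      obtain ⟨t', ht', et⟩ := hrep t ht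
      have h3 := hP'e s' t' hs' ht'
      exact es.trans ((Nat.ModEq.add_right a (Nat.ModEq.mul_left' n h3)).trans et.symm)

lemma closure_diff_finite {X : Type*} [TopologicalSpace X] {m : ℕ} (e : Fin m → EdgeC X)
    (hF : {z | ∀ i, (e i).c z ∉ Ioo (0:ℝ) 1}.Finite) {C : Set X} (hC : IsPreconnected C) :
    (closure C \ C).Finite := by
  by_contra hinf
  obtain ⟨i, hi⟩ := edge_inf e hF hinf
  obtain ⟨o, hmono, ho⟩ := inf_reals hi 3
  have l01 : o 0 < o 1 := hmono (by decide)
  have l12 : o 1 < o 2 := hmono (by decide)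
  obtain ⟨⟨w0, hw0, h0⟩, _⟩ := ho 0
  obtain ⟨⟨w1, hw1, h1⟩, hI1⟩ := ho 1
  obtain ⟨⟨w2, hw2, h2⟩, _⟩ := ho 2
  obtain ⟨u, hu, huC⟩ := mem_closure_iff.1 hw0.1 ((e i).c ⁻¹' Iio (o 1))
    (isOpen_Iio.preimage (e i).hc) (by show (e i).c w0 < o 1; rw [h0]; exact l01)
  obtain ⟨v, hv, hvC⟩ := mem_closure_iff.1 hw2.1 ((e i).c ⁻¹' Ioi (o 1))
    (isOpen_Ioi.preimage (e i).hc) (by show o 1 < (e i).c w2; rw [h2]; exact l12)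
  have hu : (e i).c u < o 1 := hu
  have hv : o 1 < (e i).c v := hv
  have := (e i).cut hC huC hvC hI1 hu.le hv.le
  rw [← h1, (e i).σc w1 (by rw [h1]; exact hI1)] at this
  exact hw1.2 this

lemma closed_exact {X : Type*} [MetricSpace X] [CompactSpace X] [PreconnectedSpace X] {m : ℕ}
    (e : Fin m → EdgeC X)
    (hF : {z | ∀ i, (e i).c z ∉ Ioo (0:ℝ) 1}.Finite) {f : X → X} (hf : Continuous f)
    (hN : NoHS f) {x : X} (hΩ : (omegaLimitSet f x).Infinite) (K : ℕ) :
    ∃ n, K + 1 ≤ n ∧ ∃ P : Set X, IsClosed P ∧ IsPreconnected P ∧ MapsTo f^[n] P P ∧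
      (∃ a, f^[a] x ∈ P) ∧
      ∀ s t, f^[s] x ∈ P → f^[t] x ∈ P → s ≡ t [MOD n] := by
  obtain ⟨n, hn, P, hPc, hPn, ⟨a, ha⟩, hex⟩ := iter_exact e hF hf hN hΩ K
  have hcl : MapsTo f^[n] (closure P) (closure P) := hPn.closure (hf.iterate n)
  refine ⟨n, hn, closure P, isClosed_closure, hPc.closure, hcl, ⟨a, subset_closure ha⟩, ?_⟩
  have key : ∀ s, f^[s] x ∈ closure P → ∃ s', f^[s'] x ∈ P ∧ s ≡ s' [MOD n] := by
    intro s hs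
    by_contra hcon
    push Not at hcon
    have hsub : range (fun j : ℕ => f^[n * j + s] x) ⊆ closure P \ P := by
      rintro _ ⟨j, rfl⟩
      refine ⟨?_, fun h => hcon _ h ?_⟩
      · simp only; rw [iterate_add_apply, iterate_mul]; exact hcl.iterate j hs
      · simp [Nat.ModEq]
    refine Set.infinite_range_of_injective ?_ ((closure_diff_finite e hF hPc).subset hsub)
    intro j j' h
    have := orbit_inj hΩ h
    have : n * j = n * j' := by omega
    exact Nat.eq_of_mul_eq_mul_left (by omega) this
  intro s t hs ht
  obtain ⟨s', hs', e1⟩ := key s hs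
  obtain ⟨t', ht', e2⟩ := key t ht
  exact e1.trans ((hex _ _ hs' ht').trans e2.symm)


lemma noncut {X : Type*} [TopologicalSpace X] (B : ℕ → Set X) (s : ℕ) (hs : 2 ≤ s)
    (hcl : ∀ j, IsClosed (B j)) (hpc : ∀ j, IsPreconnected (B j)) (hne : ∀ j, (B j).Nonempty)
    (hU : IsPreconnected (⋃ j ∈ Finset.range s, B j)) :
    ∃ j0 < s, IsPreconnected (⋃ j ∈ (Finset.range s).erase j0, B j) := by
  classical
  have key : ∀ l, l + 1 ≤ s → ∃ J ⊆ Finset.range s, J.card = l + 1 ∧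
      IsPreconnected (⋃ j ∈ J, B j) := by
    intro l
    induction l with
    | zero =>
      intro _
      refine ⟨{0}, by simpa using by omega, by simp, ?_⟩
      simpa using hpc 0
    | succ l ih =>
      intro hl
      obtain ⟨J, hJ, hJc, hJp⟩ := ih (by omega)
      have hc : (Finset.range s \ J).Nonempty := by
        rw [← Finset.card_pos, Finset.card_sdiff_of_subset hJ, Finset.card_range]; omega
      have hJn : J.Nonempty := by rw [← Finset.card_pos]; omega
      obtain ⟨j1, hj1⟩ := hc
      obtain ⟨j2, hj2⟩ := hJn
      have := isPreconnected_closed_iff.1 hU (⋃ j ∈ J, B j) (⋃ j ∈ Finset.range s \ J, B j)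
        (isClosed_biUnion_finset fun j _ => hcl j) (isClosed_biUnion_finset fun j _ => hcl j)
        (by
          intro w hw
          simp only [mem_iUnion] at hw
          obtain ⟨j, hj, hw⟩ := hw
          by_cases h : j ∈ J
          · left; simp only [mem_iUnion]; exact ⟨j, h, hw⟩
          · right; simp only [mem_iUnion]; exact ⟨j, Finset.mem_sdiff.2 ⟨hj, h⟩, hw⟩)
        (by
          obtain ⟨w, hw⟩ := hne j2
          refine ⟨w, ?_, ?_⟩
          · simp only [mem_iUnion]; exact ⟨j2, hJ hj2, hw⟩
          · simp only [mem_iUnion]; exact ⟨j2, hj2, hw⟩)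
        (by
          obtain ⟨w, hw⟩ := hne j1
          refine ⟨w, ?_, ?_⟩
          · simp only [mem_iUnion]; exact ⟨j1, (Finset.mem_sdiff.1 hj1).1, hw⟩
          · simp only [mem_iUnion]; exact ⟨j1, hj1, hw⟩)
      obtain ⟨w, -, hw1, hw2⟩ := this
      simp only [mem_iUnion] at hw2
      obtain ⟨j, hj, hw2⟩ := hw2
      rw [Finset.mem_sdiff] at hj
      refine ⟨insert j J, ?_, ?_, ?_⟩
      · rw [Finset.insert_subset_iff]; exact ⟨hj.1, hJ⟩
      · rw [Finset.card_insert_of_notMem hj.2, hJc]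
      · rw [Finset.set_biUnion_insert]
        exact IsPreconnected.union w hw2 hw1 (hpc j) hJp
  obtain ⟨J, hJ, hJc, hJp⟩ := key (s - 2) (by omega)
  have hc : (Finset.range s \ J).card = 1 := by
    rw [Finset.card_sdiff_of_subset hJ, Finset.card_range]; omega
  obtain ⟨j0, hj0⟩ := Finset.card_eq_one.1 hc
  have hm : j0 ∈ Finset.range s \ J := by rw [hj0]; simp
  refine ⟨j0, Finset.mem_range.1 (Finset.mem_sdiff.1 hm).1, ?_⟩
  have : (Finset.range s).erase j0 = J := by
    rw [← Finset.sdiff_singleton_eq_erase, ← hj0, Finset.sdiff_sdiff_eq_self hJ]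
  rw [this]; exact hJp

lemma exists_three {ι : Type*} (S : Finset ι) (hS : 2 < S.card) (φ : ι → ℝ) (hφ : Set.InjOn φ S) :
    ∃ a ∈ S, ∃ b ∈ S, ∃ c ∈ S, φ a < φ b ∧ φ b < φ c := by
  classical
  have hc : (S.image φ).card = S.card := Finset.card_image_of_injOn hφ
  obtain ⟨T, hT, hk⟩ := Finset.exists_subset_card_eq (s := S.image φ) (n := 3) (by omega)
  have hm : ∀ i, ∃ a ∈ S, φ a = T.orderEmbOfFin hk i := by
    intro i
    have := hT (T.orderEmbOfFin_mem hk i)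
    simpa using this
  obtain ⟨a, ha, ea⟩ := hm 0
  obtain ⟨b, hb, eb⟩ := hm 1
  obtain ⟨c, hc, ec⟩ := hm 2
  refine ⟨a, ha, b, hb, c, hc, ?_, ?_⟩
  · rw [ea, eb]; exact (T.orderEmbOfFin hk).strictMono (by decide)
  · rw [eb, ec]; exact (T.orderEmbOfFin hk).strictMono (by decide)

lemma disj_cycle {X : Type*} [MetricSpace X] [CompactSpace X] [PreconnectedSpace X] {m : ℕ}
    (e : Fin m → EdgeC X)
    (hF : {z | ∀ i, (e i).c z ∉ Ioo (0:ℝ) 1}.Finite) {f : X → X} (hf : Continuous f)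
    {x : X} (hΩ : (omegaLimitSet f x).Infinite) {n : ℕ} (hn : 1 ≤ n) {P : Set X}
    (hPcl : IsClosed P) (hPc : IsPreconnected P) (hPn : MapsTo f^[n] P P) {a : ℕ}
    (ha : f^[a] x ∈ P) (hex : ∀ s t, f^[s] x ∈ P → f^[t] x ∈ P → s ≡ t [MOD n]) :
    ∃ N, n ≤ N * (2 * m + 1) ∧ ∃ P' : Set X, IsClosed P' ∧ IsPreconnected P' ∧ MapsTo f^[N] P' P' ∧
      f^[a] x ∈ P' ∧ ∀ i, ∀ w ∈ P', f^[i] w ∈ P' → N ∣ i := by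
  classical
  obtain ⟨P', N, hN, hPP', hP'O, hP'c, hP'N, hP'd, hmax⟩ :=
    compC hf hPc ha hn ⟨_, ha, hPn ha⟩
  have hinj := orbit_inj hΩ
  have hPnd : ∀ d, MapsTo f^[n * d] P P := fun d => by rw [iterate_mul]; exact hPn.iterate d
  have hNn : N ∣ n := hP'd n _ (hPP' ha) (hPP' (hPn ha))
  obtain ⟨s, hs⟩ := hNn
  have hspos : 0 < s := Nat.pos_of_ne_zero (by rintro rfl; omega)
  have hred : ∀ j, f^[j] '' P ⊆ f^[j % n] '' P := by
    rintro j _ ⟨p, hp, rfl⟩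
    refine ⟨f^[n * (j / n)] p, hPnd _ hp, ?_⟩
    rw [← iterate_add_apply, Nat.mod_add_div]
  have hPk : IsCompact P := hPcl.isCompact
  have hcomp : ∀ j, IsClosed (f^[j] '' P) := fun j => (hPk.image (hf.iterate j)).isClosed
  have hOcl : IsClosed (⋃ j : ℕ, f^[j] '' P) := by
    have : (⋃ j : ℕ, f^[j] '' P) = ⋃ j ∈ Finset.range n, f^[j] '' P := by
      apply Subset.antisymm
      · apply iUnion_subset
        intro j w hw
        simp only [mem_iUnion]
        exact ⟨j % n, Finset.mem_range.2 (Nat.mod_lt _ hn), hred j hw⟩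
      · intro w hw
        simp only [mem_iUnion] at hw ⊢
        obtain ⟨j, _, hw⟩ := hw
        exact ⟨j, hw⟩
    rw [this]
    exact isClosed_biUnion_finset fun j _ => hcomp j
  have hP'cl : IsClosed P' := by
    apply isClosed_of_closure_subset
    apply hmax _ (closure_minimal hP'O hOcl) hP'c.closure
    exact ⟨_, subset_closure (hPP' ha), hPP' ha⟩
  refine ⟨N, ?_, P', hP'cl, hP'c, hP'N, hPP' ha, hP'd⟩
  rw [hs]
  apply Nat.mul_le_mul_left
  by_contra hlarge
  push Not at hlarge
  -- pieces
  let B : ℕ → Set X := fun j => f^[N * j] '' P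
  have hBU : (⋃ j ∈ Finset.range s, B j) = P' := by
    apply Subset.antisymm
    · intro w hw
      simp only [mem_iUnion] at hw
      obtain ⟨j, _, p, hp, rfl⟩ := hw
      rw [iterate_mul]
      exact hP'N.iterate j (hPP' hp)
    · intro w hw
      obtain ⟨j, hj⟩ := mem_iUnion.1 (hP'O hw)
      obtain ⟨p, hp, hpw⟩ := hred j hj
      have hd : N ∣ j % n := hP'd _ p (hPP' hp) (by rw [hpw]; exact hw)
      obtain ⟨l, hl⟩ := hd
      have : l < s := by
        have h1 : j % n < n := Nat.mod_lt _ hn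
        rw [hl, hs] at h1
        exact Nat.lt_of_mul_lt_mul_left h1
      simp only [mem_iUnion]
      exact ⟨l, Finset.mem_range.2 this, p, hp, by rw [← hl]; exact hpw⟩
  obtain ⟨j0, hj0, hUc⟩ := noncut B s (by omega) (fun j => hcomp _)
    (fun j => hPc.image _ (hf.iterate _).continuousOn) (fun j => ⟨_, _, ha, rfl⟩)
    (by rw [hBU]; exact hP'c)
  have hin : ∀ d < s, ∀ l, s ≤ l → ¬ (l ≡ j0 + d [MOD s]) →
      f^[N * l + a] x ∈ f^[N * d] '' (⋃ j ∈ (Finset.range s).erase j0, B j) := by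
    intro d hd l hl hne
    refine ⟨f^[N * ((l - d) % s) + n * ((l - d) / s)] (f^[a] x), ?_, ?_⟩
    · simp only [mem_iUnion]
      refine ⟨(l - d) % s, ?_, f^[n * ((l - d) / s)] (f^[a] x), hPnd _ ha, ?_⟩
      · rw [Finset.mem_erase, Finset.mem_range]
        refine ⟨fun h => hne ?_, Nat.mod_lt _ hspos⟩
        have h1 : l - d ≡ j0 [MOD s] := by rw [← h]; exact (Nat.mod_modEq _ _).symm
        have := h1.add_right d
        rwa [Nat.sub_add_cancel (by omega)] at this
      · rw [← iterate_add_apply]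
    · rw [← iterate_add_apply, ← iterate_add_apply]
      congr 2
      have h1 := Nat.mod_add_div (l - d) s
      have h2 : l = d + ((l - d) % s + s * ((l - d) / s)) := by omega
      conv_rhs => rw [h2]
      rw [hs]
      ring
  have hout : ∀ d l, l ≡ j0 + d [MOD s] →
      f^[N * l + a] x ∉ f^[N * d] '' (⋃ j ∈ (Finset.range s).erase j0, B j) := by
    rintro d l hl ⟨w, hw, hwx⟩
    simp only [mem_iUnion] at hw
    obtain ⟨j, hj, p, hp, rfl⟩ := hw
    rw [Finset.mem_erase, Finset.mem_range] at hj
    rw [← iterate_add_apply] at hwx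
    -- push forward
    have h1 : f^[(n - 1) * (N * d + N * j) + (N * l + a)] x ∈ P := by
      rw [iterate_add_apply, ← hwx, ← iterate_add_apply]
      have : (n - 1) * (N * d + N * j) + (N * d + N * j) = n * (N * d + N * j) := by
        obtain ⟨n', rfl⟩ : ∃ n', n = n' + 1 := ⟨n - 1, by omega⟩
        simp only [Nat.add_sub_cancel]; ring
      rw [this]
      exact hPnd _ hp
    have h2 := (hex _ _ h1 ha).add_right (N * d + N * j)
    have h3 : (n - 1) * (N * d + N * j) + (N * l + a) + (N * d + N * j)
        = n * (N * d + N * j) + (N * l + a) := by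
      obtain ⟨n', rfl⟩ : ∃ n', n = n' + 1 := ⟨n - 1, by omega⟩
      simp only [Nat.add_sub_cancel]; ring
    rw [h3] at h2
    have h4 : N * l + a ≡ a + (N * d + N * j) [MOD n] := by
      refine Nat.ModEq.trans ?_ h2
      simp [Nat.ModEq]
    have h5 : N * l ≡ N * (d + j) [MOD N * s] := by
      rw [← hs]
      apply Nat.ModEq.add_right_cancel' a
      rw [Nat.mul_add, Nat.add_comm _ a]
      rw [Nat.add_comm a] at h4
      rw [Nat.add_comm a]
      exact h4
    have h6 : l ≡ d + j [MOD s] := Nat.ModEq.mul_left_cancel' (by omega) h5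
    have h7 : j0 ≡ j [MOD s] := by
      apply Nat.ModEq.add_left_cancel' d
      rw [Nat.add_comm d j0]
      exact hl.symm.trans h6
    have : j0 = j := Nat.ModEq.eq_of_lt_of_lt h7 hj0 hj.2
    exact hj.1 this.symm
  -- marks
  have hmark : ∀ j, ∃ l, s ≤ l ∧ l ≡ j [MOD s] ∧ ∃ i, (e i).c (f^[N * l + a] x) ∈ Ioo (0:ℝ) 1 := by
    intro j
    by_contra hcon
    push Not at hcon
    have hsub : range (fun u : ℕ => f^[N * (j + s * (u + 1)) + a] x) ⊆
        {z | ∀ i, (e i).c z ∉ Ioo (0:ℝ) 1} := by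
      rintro _ ⟨u, rfl⟩
      refine hcon _ ?_ (by simp [Nat.ModEq])
      have : s * 1 ≤ s * (u+1) := Nat.mul_le_mul_left _ (by omega)
      omega
    refine Set.infinite_range_of_injective ?_ (hF.subset hsub)
    intro u v h
    have h1 := hinj h
    have h2 : N * (j + s * (u + 1)) = N * (j + s * (v + 1)) := by omega
    have h3 := Nat.eq_of_mul_eq_mul_left hN h2
    have h4 : s * (u + 1) = s * (v + 1) := by omega
    have := Nat.eq_of_mul_eq_mul_left hspos h4
    omega
  choose L hL1 hL2 I hI using hmark
  obtain ⟨i, _, hi⟩ := Finset.exists_lt_card_fiber_of_mul_lt_card_of_maps_to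
    (s := Finset.range s) (t := (Finset.univ : Finset (Fin m))) (f := I) (n := 2)
    (fun _ _ => Finset.mem_univ _) (by rw [Finset.card_fin, Finset.card_range]; omega)
  set S := (Finset.range s).filter (fun j => I j = i) with hS
  have hSI : ∀ j ∈ S, j < s ∧ (e i).c (f^[N * (L j) + a] x) ∈ Ioo (0:ℝ) 1 := by
    intro j hj
    rw [hS, Finset.mem_filter, Finset.mem_range] at hj
    refine ⟨hj.1, ?_⟩
    have := hI j
    rw [hj.2] at this
    exact this
  have hLj : ∀ j ∈ S, ∀ j' ∈ S, L j ≡ L j' [MOD s] → j = j' := by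
    intro j hj j' hj' h
    exact Nat.ModEq.eq_of_lt_of_lt ((hL2 j).symm.trans (h.trans (hL2 j'))) (hSI j hj).1 (hSI j' hj').1
  have hφ : Set.InjOn (fun j => (e i).c (f^[N * (L j) + a] x)) S := by
    intro j hj j' hj' h
    simp only at h
    apply hLj j hj j' hj'
    have h1 := (e i).σc _ (hSI j hj).2
    rw [h, (e i).σc _ (hSI j' hj').2] at h1
    have h2 := hinj h1
    have h3 : N * L j' = N * L j := by omega
    rw [Nat.eq_of_mul_eq_mul_left hN h3]
  obtain ⟨j1, hj1, j2, hj2, j3, hj3, l12, l23⟩ := exists_three S hi _ hφ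
  set d := (L j2 + s - j0) % s with hd
  have hdlt : d < s := Nat.mod_lt _ hspos
  have hd2 : L j2 ≡ j0 + d [MOD s] := by
    have h1 : d ≡ L j2 + s - j0 [MOD s] := Nat.mod_modEq _ _
    have h2 := (h1.add_left j0).symm
    have h3 : j0 + (L j2 + s - j0) = L j2 + s := by omega
    rw [h3] at h2
    refine Nat.ModEq.trans ?_ h2
    simp [Nat.ModEq]
  have n1 : ¬ (L j1 ≡ j0 + d [MOD s]) := by
    intro h
    have := hLj j1 hj1 j2 hj2 (h.trans hd2.symm)
    rw [this] at l12; exact lt_irrefl _ l12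
  have n3 : ¬ (L j3 ≡ j0 + d [MOD s]) := by
    intro h
    have := hLj j3 hj3 j2 hj2 (h.trans hd2.symm)
    rw [this] at l23; exact lt_irrefl _ l23
  have := (e i).cut (hUc.image _ (hf.iterate (N * d)).continuousOn) (hin d hdlt _ (hL1 j1) n1)
    (hin d hdlt _ (hL1 j3) n3) (hSI j2 hj2).2 l12.le l23.le
  rw [(e i).σc _ (hSI j2 hj2).2] at this
  exact hout d _ hd2 this


structure Cyc {X : Type*} [TopologicalSpace X] {m : ℕ} (e : Fin m → EdgeC X) (f : X → X) (x : X)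
    (N : ℕ) (E : ℕ → Set X) : Prop where
  hN : 1 ≤ N
  per : ∀ t, E (t + N) = E t
  cl : ∀ t, IsClosed (E t)
  conv : ∀ t i, ∀ u ∈ E t, ∀ v ∈ E t, ∀ s ∈ Ioo (0:ℝ) 1, (e i).c u ≤ s → s ≤ (e i).c v →
    (e i).σ s ∈ E t
  map : ∀ t, MapsTo f (E t) (E (t + 1))
  disj : ∀ t t' z, z ∈ E t → z ∈ E t' → t ≡ t' [MOD N]
  vis : ∃ T, ∀ t, T ≤ t → f^[t] x ∈ E t

lemma cyc_exists {X : Type*} [MetricSpace X] [CompactSpace X] [PreconnectedSpace X] {m : ℕ}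
    (e : Fin m → EdgeC X)
    (hF : {z | ∀ i, (e i).c z ∉ Ioo (0:ℝ) 1}.Finite) {f : X → X} (hf : Continuous f)
    (hN : NoHS f) {x : X} (hΩ : (omegaLimitSet f x).Infinite) (K : ℕ) :
    ∃ N, K ≤ N ∧ ∃ E, Cyc e f x N E := by
  obtain ⟨n, hn, P, hPcl, hPc, hPn, ⟨a, ha⟩, hex⟩ := closed_exact e hF hf hN hΩ (K * (2 * m + 1))
  obtain ⟨N, hnN, P', hcl, hpc, hmap, haP, hdvd⟩ :=
    disj_cycle e hF hf hΩ (by omega) hPcl hPc hPn ha hex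
  have hKN : K < N := by
    have : K * (2 * m + 1) < N * (2 * m + 1) := by omega
    exact Nat.lt_of_mul_lt_mul_right this
  have hN1 : 1 ≤ N := by omega
  have hred : ∀ j, f^[j] '' P' ⊆ f^[j % N] '' P' := by
    rintro j _ ⟨p, hp, rfl⟩
    refine ⟨f^[N * (j / N)] p, ?_, ?_⟩
    · rw [iterate_mul]; exact hmap.iterate _ hp
    · rw [← iterate_add_apply, Nat.mod_add_div]
  refine ⟨N, hKN.le, fun t => f^[(t + a * (N - 1)) % N] '' P', ⟨hN1, ?_, ?_, ?_, ?_, ?_, a, ?_⟩⟩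
  · intro t
    rw [show t + N + a * (N - 1) = t + a * (N - 1) + N by ring, Nat.add_mod_right]
  · intro t
    exact (hcl.isCompact.image (hf.iterate _)).isClosed
  · intro t i u hu v hv s hs h1 h2
    exact (e i).cut (hpc.image _ (hf.iterate _).continuousOn) hu hv hs h1 h2
  · rintro t _ ⟨p, hp, rfl⟩
    rw [← iterate_succ_apply' f]
    have := hred _ ⟨p, hp, rfl⟩ (a := f^[((t + a * (N - 1)) % N).succ] p)
    have h2 : ((t + a * (N - 1)) % N).succ % N = (t + 1 + a * (N - 1)) % N := by
      rw [Nat.succ_eq_add_one, Nat.mod_add_mod]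
      congr 1; ring
    rw [h2] at this
    exact this
  · rintro t t' _ ⟨p, hp, rfl⟩ ⟨p', hp', h⟩
    set i := (t + a * (N - 1)) % N with hi
    set i' := (t' + a * (N - 1)) % N with hi'
    have l1 : i < N := Nat.mod_lt _ hN1
    have l2 : i' < N := Nat.mod_lt _ hN1
    have h1 : f^[N - i' + i] p ∈ P' := by
      rw [iterate_add_apply, ← h, ← iterate_add_apply, Nat.sub_add_cancel l2.le]
      exact hmap hp'
    have h2 := hdvd _ p hp h1
    have h3 : i ≡ i' [MOD N] := by
      have : N - i' + i ≡ 0 [MOD N] := (Nat.modEq_zero_iff_dvd).2 h2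
      have := this.add_right i'
      have e1 : N - i' + i + i' = i + N := by omega
      rw [e1, Nat.zero_add] at this
      refine Nat.ModEq.trans ?_ this
      simp [Nat.ModEq]
    have h4 : t + a * (N-1) ≡ t' + a * (N-1) [MOD N] :=
      (Nat.mod_modEq _ _).symm.trans (h3.trans (Nat.mod_modEq _ _))
    exact Nat.ModEq.add_right_cancel' _ h4
  · intro t ht
    have h1 : f^[t] x ∈ f^[t - a] '' P' := ⟨_, haP, by rw [← iterate_add_apply, Nat.sub_add_cancel ht]⟩
    have h2 := hred _ h1
    have h3 : (t - a) % N = (t + a * (N-1)) % N := by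
      have : t + a * (N-1) = t - a + N * a := by
        obtain ⟨n', rfl⟩ : ∃ n', N = n' + 1 := ⟨N - 1, by omega⟩
        simp only [Nat.add_sub_cancel]
        have : (n' + 1) * a = a * n' + a := by ring
        omega
      rw [this, Nat.add_mul_mod_self_left]
    rw [h3] at h2
    exact h2

lemma Cyc.per_mul {X : Type*} [TopologicalSpace X] {m : ℕ} {e : Fin m → EdgeC X} {f : X → X} {x : X}
    {N : ℕ} {E : ℕ → Set X} (h : Cyc e f x N E) (t k : ℕ) : E (t + N * k) = E t := by
  induction k with
  | zero => simp
  | succ k ih => rw [Nat.mul_succ, ← Nat.add_assoc, h.per, ih]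

lemma Cyc.inter {X : Type*} [TopologicalSpace X] {m : ℕ} {e : Fin m → EdgeC X} {f : X → X} {x : X}
    {N : ℕ} {E : ℕ → Set X} (h : Cyc e f x N E) {N' : ℕ} {E' : ℕ → Set X} (h' : Cyc e f x N' E') :
    Cyc e f x (Nat.lcm N N') (fun t => E t ∩ E' t) := by
  obtain ⟨T, hT⟩ := h.vis
  obtain ⟨T', hT'⟩ := h'.vis
  refine ⟨Nat.lcm_pos h.hN h'.hN, ?_, ?_, ?_, ?_, ?_, max T T', ?_⟩
  · intro t
    obtain ⟨k, hk⟩ := Nat.dvd_lcm_left N N'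
    obtain ⟨k', hk'⟩ := Nat.dvd_lcm_right N N'
    congr 1
    · rw [hk, h.per_mul]
    · rw [hk', h'.per_mul]
  · intro t; exact (h.cl t).inter (h'.cl t)
  · intro t i u hu v hv s hs h1 h2
    exact ⟨h.conv t i u hu.1 v hv.1 s hs h1 h2, h'.conv t i u hu.2 v hv.2 s hs h1 h2⟩
  · intro t z hz
    exact ⟨h.map t hz.1, h'.map t hz.2⟩
  · intro t t' z hz hz'
    have a1 := h.disj t t' z hz.1 hz'.1
    have a2 := h'.disj t t' z hz.2 hz'.2
    exact Nat.mod_lcm a1 a2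
  · intro t ht
    exact ⟨hT t ((le_max_left _ _).trans ht), hT' t ((le_max_right _ _).trans ht)⟩

lemma Cyc.refine {X : Type*} [MetricSpace X] [CompactSpace X] [PreconnectedSpace X] {m : ℕ}
    {e : Fin m → EdgeC X}
    (hF : {z | ∀ i, (e i).c z ∉ Ioo (0:ℝ) 1}.Finite) {f : X → X} (hf : Continuous f)
    (hN : NoHS f) {x : X} (hΩ : (omegaLimitSet f x).Infinite) {N : ℕ} {E : ℕ → Set X}
    (h : Cyc e f x N E) (K : ℕ) :
    ∃ q E', K ≤ q ∧ Cyc e f x (N * q) E' ∧ ∀ t, E' t ⊆ E t := by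
  obtain ⟨N', hK, E', h'⟩ := cyc_exists e hF hf hN hΩ (N * K)
  have hi := h.inter h'
  obtain ⟨q, hq⟩ := Nat.dvd_lcm_left N N'
  refine ⟨q, _, ?_, by rw [← hq]; exact hi, fun t => inter_subset_left⟩
  have : N * K ≤ N * q := by
    rw [← hq]
    exact hK.trans (Nat.le_of_dvd (Nat.lcm_pos h.hN h'.hN) (Nat.dvd_lcm_right _ _))
  exact Nat.le_of_mul_le_mul_left this h.hN


lemma Cyc.mapIter {X : Type*} [TopologicalSpace X] {m : ℕ} {e : Fin m → EdgeC X} {f : X → X} {x : X}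
    {N : ℕ} {E : ℕ → Set X} (h : Cyc e f x N E) (t k : ℕ) : MapsTo f^[k] (E t) (E (t + k)) := by
  induction k with
  | zero => intro z hz; exact hz
  | succ k ih =>
    intro z hz
    rw [iterate_succ_apply']
    exact h.map _ (ih hz)

lemma Cyc.times {X : Type*} [TopologicalSpace X] {m : ℕ} {e : Fin m → EdgeC X} {f : X → X} {x : X}
    {N : ℕ} {E : ℕ → Set X} (h : Cyc e f x N E) (t : ℕ) :
    ∃ T, ∀ j, f^[t + N * (T + j)] x ∈ E t := by
  obtain ⟨T, hT⟩ := h.vis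
  refine ⟨T, fun j => ?_⟩
  rw [← h.per_mul t (T + j)]
  apply hT
  have : 1 * (T + j) ≤ N * (T + j) := Nat.mul_le_mul_right _ h.hN
  omega

lemma Cyc.omega_ne {X : Type*} [MetricSpace X] [CompactSpace X] {m : ℕ} {e : Fin m → EdgeC X}
    {f : X → X} {x : X}
    {N : ℕ} {E : ℕ → Set X} (h : Cyc e f x N E) (t : ℕ) : (omegaLimitSet f x ∩ E t).Nonempty := by
  obtain ⟨T, hT⟩ := h.times t
  have hc : IsCompact (E t) := (h.cl t).isCompact
  obtain ⟨z, hz, hzc⟩ := hc (f := Filter.map (fun j : ℕ => f^[t + N * (T + j)] x) atTop)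
    (by rw [le_principal_iff, Filter.mem_map]; exact Filter.univ_mem' hT)
  refine ⟨z, ?_, hz⟩
  rw [mem_omega_iff]
  have ht : Tendsto (fun j => t + N * (T + j)) atTop atTop := by
    apply tendsto_atTop_mono (f := fun j => j) _ tendsto_id
    intro j
    have : 1 * (T + j) ≤ N * (T + j) := Nat.mul_le_mul_right _ h.hN
    omega
  exact MapClusterPt.of_comp (u := fun t => f^[t] x) ht hzc

lemma Cyc.periodicArc {X : Type*} [MetricSpace X] [CompactSpace X] {m : ℕ} {e : Fin m → EdgeC X}
    {f : X → X} {x : X} (hΩ : (omegaLimitSet f x).Infinite)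
    {N : ℕ} {E : ℕ → Set X} (h : Cyc e f x N E) (t : ℕ) (i : Fin m)
    (hE : ∀ z ∈ E t, (e i).c z ∈ Ioo (0:ℝ) 1) : IsPeriodicArc f (E t) N := by
  refine ⟨?_, h.hN, ?_, ?_⟩
  · obtain ⟨T, hT⟩ := h.times t
    have hc : IsCompact (E t) := (h.cl t).isCompact
    have hne : (E t).Nonempty := ⟨_, hT 0⟩
    obtain ⟨u, hu, hu'⟩ := hc.exists_isMinOn hne (e i).hc.continuousOn
    obtain ⟨v, hv, hv'⟩ := hc.exists_isMaxOn hne (e i).hc.continuousOn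
    have hinj : ∀ z ∈ E t, ∀ w ∈ E t, (e i).c z = (e i).c w → z = w := by
      intro z hz w hw hzw
      rw [← (e i).σc z (hE z hz), hzw, (e i).σc w (hE w hw)]
    have huv : (e i).c u < (e i).c v := by
      by_contra hcon
      push Not at hcon
      have a0 := hT 0
      have a1 := hT 1
      have : f^[t + N * (T + 0)] x = f^[t + N * (T + 1)] x := by
        apply hinj _ a0 _ a1
        have b1 : (e i).c u ≤ _ := hu' a0
        have b2 : _ ≤ (e i).c v := hv' a0
        have b3 : (e i).c u ≤ _ := hu' a1
        have b4 : _ ≤ (e i).c v := hv' a1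
        linarith
      have := orbit_inj hΩ this
      have h2 : N * (T + 0) = N * (T + 1) := by omega
      have := Nat.eq_of_mul_eq_mul_left h.hN h2
      omega
    let φ : E t → Icc ((e i).c u) ((e i).c v) := fun z => ⟨(e i).c z, hu' z.2, hv' z.2⟩
    have hφ : Continuous φ := ((e i).hc.comp continuous_subtype_val).subtype_mk _
    have hbij : Bijective φ := by
      constructor
      · intro z w hzw
        exact Subtype.ext (hinj z z.2 w w.2 (congrArg Subtype.val hzw))
      · rintro ⟨s, hs⟩
        have hs' : s ∈ Ioo (0:ℝ) 1 := ⟨(hE u hu).1.trans_le hs.1, hs.2.trans_lt (hE v hv).2⟩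
        refine ⟨⟨(e i).σ s, h.conv t i u hu v hv s hs' hs.1 hs.2⟩, ?_⟩
        exact Subtype.ext ((e i).cσ s hs')
    have : CompactSpace (E t) := isCompact_iff_compactSpace.1 hc
    let Φ : E t ≃ₜ Icc ((e i).c u) ((e i).c v) :=
      Continuous.homeoOfEquivCompactToT2 (f := Equiv.ofBijective φ hbij) hφ
    exact ⟨Φ.trans (iccHomeoI _ _ huv)⟩
  · have := h.mapIter t N
    rwa [h.per] at this
  · intro a b hab hb
    rw [Set.disjoint_left]
    rintro z ⟨p, hp, rfl⟩ ⟨q, hq, hqp⟩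
    have h1 := h.mapIter t a hp
    have h2 := h.mapIter t b hq
    rw [hqp] at h2
    have h3 := h.disj _ _ _ h1 h2
    have h4 : a ≡ b [MOD N] := Nat.ModEq.add_left_cancel' t h3
    have := Nat.ModEq.eq_of_lt_of_lt h4 (by omega) hb
    omega

lemma Cyc.shrink {X : Type*} [MetricSpace X] [CompactSpace X] [PreconnectedSpace X] {m : ℕ}
    {e : Fin m → EdgeC X}
    (hF : {z | ∀ i, (e i).c z ∉ Ioo (0:ℝ) 1}.Finite) {f : X → X} (hf : Continuous f)
    (hN : NoHS f) {x : X} (hΩ : (omegaLimitSet f x).Infinite) {N : ℕ} {E : ℕ → Set X}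
    (h : Cyc e f x N E) (t : ℕ) (i : Fin m) (hE : ∀ z ∈ E t, (e i).c z ∈ Ioo (0:ℝ) 1)
    (ε : ℝ) (hε : 0 < ε) :
    ∃ N' E' t', Cyc e f x N' E' ∧ E' t' ⊆ E t ∧ ∀ u ∈ E' t', ∀ v ∈ E' t', (e i).c v - (e i).c u < ε := by
  obtain ⟨q, E', hq, h', hsub⟩ := h.refine hF hf hN hΩ (⌊1/ε⌋₊ + 2)
  by_contra hcon
  push Not at hcon
  have hEt : ∀ j, E' (t + N * j) ⊆ E t := by
    intro j
    have := hsub (t + N * j)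
    rwa [h.per_mul] at this
  have hj : ∀ j, ∃ u ∈ E' (t + N * j), ∃ v ∈ E' (t + N * j), ε ≤ (e i).c v - (e i).c u :=
    fun j => hcon _ E' (t + N * j) h' (hEt j)
  choose u hu v hv huv using hj
  have hsep : ∀ j < q, ∀ j' < q, j ≠ j' → (e i).c (u j) ≤ (e i).c (u j') →
      (e i).c (u j) + ε ≤ (e i).c (u j') := by
    intro j hj j' hj' hne hle
    by_contra hlt
    push Not at hlt
    have hI := hE _ (hEt j' (hu j'))
    have h1 := h'.conv _ i _ (hu j) _ (hv j) _ hI hle (by linarith [huv j])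
    rw [(e i).σc _ hI] at h1
    have h2 := h'.disj _ _ _ h1 (hu j')
    have h3 := Nat.ModEq.add_left_cancel' t h2
    have h4 : j ≡ j' [MOD q] := Nat.ModEq.mul_left_cancel' (by have := h.hN; omega) h3
    exact hne (Nat.ModEq.eq_of_lt_of_lt h4 hj hj')
  have hcard : (Finset.range q).card ≤ (Finset.range (⌊1/ε⌋₊ + 1)).card := by
    apply Finset.card_le_card_of_injOn (fun j => ⌊(e i).c (u j) / ε⌋₊)
    · intro j _
      have hI := hE _ (hEt j (hu j))
      simp only [Finset.coe_range, mem_Iio]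
      apply Nat.lt_succ_of_le
      apply Nat.floor_le_floor
      exact div_le_div_of_nonneg_right hI.2.le hε.le
    · intro j hj j' hj' hjj
      simp only [Finset.coe_range, mem_Iio] at hj hj' hjj
      by_contra hne
      have hI := hE _ (hEt j (hu j))
      have hI' := hE _ (hEt j' (hu j'))
      have p1 : 0 ≤ (e i).c (u j) / ε := div_nonneg hI.1.le hε.le
      have p2 : 0 ≤ (e i).c (u j') / ε := div_nonneg hI'.1.le hε.le
      have f1 := Nat.floor_le p1
      have f2 := Nat.floor_le p2
      have g1 := Nat.lt_floor_add_one ((e i).c (u j) / ε)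
      have g2 := Nat.lt_floor_add_one ((e i).c (u j') / ε)
      rw [hjj] at f1 g1
      rcases le_total ((e i).c (u j)) ((e i).c (u j')) with hle | hle
      · have := hsep j hj j' hj' hne hle
        have h5 : (e i).c (u j) / ε + 1 ≤ (e i).c (u j') / ε := by
          rw [le_div_iff₀ hε, add_mul, div_mul_cancel₀ _ hε.ne']; linarith
        linarith
      · have := hsep j' hj' j hj (Ne.symm hne) hle
        have h5 : (e i).c (u j') / ε + 1 ≤ (e i).c (u j) / ε := by
          rw [le_div_iff₀ hε, add_mul, div_mul_cancel₀ _ hε.ne']; linarith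
        linarith
  simp only [Finset.card_range] at hcard
  omega

lemma Cyc.point {X : Type*} [MetricSpace X] [CompactSpace X] [PreconnectedSpace X] {m : ℕ}
    {e : Fin m → EdgeC X}
    (hF : {z | ∀ i, (e i).c z ∉ Ioo (0:ℝ) 1}.Finite) {f : X → X} (hf : Continuous f)
    (hN : NoHS f) {x : X} (hΩ : (omegaLimitSet f x).Infinite) {N : ℕ} {E : ℕ → Set X}
    (h : Cyc e f x N E) (t : ℕ) (i : Fin m) (hE : ∀ z ∈ E t, (e i).c z ∈ Ioo (0:ℝ) 1) :
    ∃ a ∈ omegaLimitSet f x, a ∈ E t ∧ ⋂₀ { I | (∃ s, IsPeriodicArc f I s) ∧ a ∈ I } = {a} := by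
  let Good : Set X → Prop := fun S => (∃ N E t, Cyc e f x N E ∧ S = E t) ∧
    ∀ z ∈ S, (e i).c z ∈ Ioo (0:ℝ) 1
  have step : ∀ (S : {S : Set X // Good S}) (l : ℕ), ∃ S' : {S : Set X // Good S}, S'.1 ⊆ S.1 ∧
      ∀ u ∈ S'.1, ∀ v ∈ S'.1, (e i).c v - (e i).c u < 1 / ((l:ℝ) + 1) := by
    rintro ⟨_, ⟨N, E, t, h, rfl⟩, hE⟩ l
    obtain ⟨N', E', t', h', hs, hd⟩ := h.shrink hF hf hN hΩ t i hE (1 / ((l:ℝ) + 1)) (by positivity)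
    exact ⟨⟨E' t', ⟨N', E', t', h', rfl⟩, fun z hz => hE z (hs hz)⟩, hs, hd⟩
  choose nx hnx1 hnx2 using step
  let S : ℕ → {S : Set X // Good S} := fun l =>
    Nat.rec ⟨E t, ⟨N, E, t, h, rfl⟩, hE⟩ (fun l S => nx S l) l
  have hSs : ∀ l, S (l+1) = nx (S l) l := fun l => rfl
  have hS0 : (S 0).1 = E t := rfl
  have hne : (⋂ l, (omegaLimitSet f x ∩ (S l).1)).Nonempty := by
    have hcl : ∀ l, IsClosed (omegaLimitSet f x ∩ (S l).1) := by
      intro l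
      obtain ⟨⟨N, E, t, h, hs⟩, _⟩ := (S l).2
      rw [hs]
      exact (omega_closed f x).inter (h.cl t)
    apply IsCompact.nonempty_iInter_of_sequence_nonempty_isCompact_isClosed
    · intro l
      apply inter_subset_inter_right
      rw [hSs]; exact hnx1 _ _
    · intro l
      obtain ⟨⟨N, E, t, h, hs⟩, _⟩ := (S l).2
      rw [hs]
      exact h.omega_ne t
    · exact (hcl 0).isCompact
    · exact hcl
  obtain ⟨a, ha⟩ := hne
  rw [mem_iInter] at ha
  refine ⟨a, (ha 0).1, (ha 0).2, ?_⟩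
  apply Subset.antisymm
  · intro b hb
    have hbS : ∀ l, b ∈ (S l).1 := by
      intro l
      apply hb
      refine ⟨?_, (ha l).2⟩
      obtain ⟨⟨N, E, t, h, hs⟩, hE⟩ := (S l).2
      rw [hs] at hE ⊢
      exact ⟨N, h.periodicArc hΩ t i hE⟩
    have hle : ∀ u v, (∀ l, u ∈ (S l).1) → (∀ l, v ∈ (S l).1) → (e i).c v ≤ (e i).c u := by
      intro u v hu hv
      by_contra hlt
      push Not at hlt
      obtain ⟨l, hl⟩ := exists_nat_one_div_lt (sub_pos.2 hlt)
      have := hnx2 (S l) l u (hu (l+1)) v (hv (l+1))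
      linarith
    have haS : ∀ l, a ∈ (S l).1 := fun l => (ha l).2
    have heq : (e i).c b = (e i).c a := le_antisymm (hle a b haS hbS) (hle b a hbS haS)
    have h1 := (e i).σc b ((S 0).2.2 b (hbS 0))
    rw [heq, (e i).σc a ((S 0).2.2 a (haS 0))] at h1
    exact h1.symm
  · rintro _ rfl I hI
    exact hI.2

lemma main_dyn {X : Type*} [MetricSpace X] [CompactSpace X] [PreconnectedSpace X] {m : ℕ}
    (e : Fin m → EdgeC X)
    (hF : {z | ∀ i, (e i).c z ∉ Ioo (0:ℝ) 1}.Finite) {f : X → X} (hf : Continuous f)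
    (hN : NoHS f) {x : X} (hΩ : (omegaLimitSet f x).Infinite) :
    { a ∈ omegaLimitSet f x |
      ⋂₀ { I | (∃ s, IsPeriodicArc f I s) ∧ a ∈ I } = {a} }.Infinite := by
  classical
  intro hfin
  set G := { a ∈ omegaLimitSet f x | ⋂₀ { I | (∃ s, IsPeriodicArc f I s) ∧ a ∈ I } = {a} } with hG
  obtain ⟨N, hNK, E, h⟩ := cyc_exists e hF hf hN hΩ (hfin.toFinset.card + 1 + 2 * m)
  have hmeet : ∀ t, ∃ i, ∃ u ∈ E t, (e i).c u ∈ Ioo (0:ℝ) 1 := by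
    intro t
    obtain ⟨T, hT⟩ := h.times t
    by_contra hcon
    push Not at hcon
    have hsub : range (fun j : ℕ => f^[t + N * (T + j)] x) ⊆ {z | ∀ i, (e i).c z ∉ Ioo (0:ℝ) 1} := by
      rintro _ ⟨j, rfl⟩ i
      exact hcon i _ (hT j)
    refine Set.infinite_range_of_injective ?_ (hF.subset hsub)
    intro j j' hjj
    have h1 := orbit_inj hΩ hjj
    have h2 : N * (T + j) = N * (T + j') := by omega
    have := Nat.eq_of_mul_eq_mul_left h.hN h2
    omega
  choose I u hu huI using hmeet
  let good : ℕ → Prop := fun t => ∀ z ∈ E t, (e (I t)).c z ∈ Ioo (0:ℝ) 1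
  let A := (Finset.range N).filter good
  let B := (Finset.range N).filter (fun t => ¬ good t)
  have hAB : A.card + B.card = N := by
    have := Finset.card_filter_add_card_filter_not (s := Finset.range N) good
    rwa [Finset.card_range] at this
  have heqN : ∀ t t' z, t < N → t' < N → z ∈ E t → z ∈ E t' → t = t' := fun t t' z h1 h2 hz hz' =>
    Nat.ModEq.eq_of_lt_of_lt (h.disj t t' z hz hz') h1 h2
  have hB : B.card ≤ 2 * m := by
    have hbad : ∀ t, ¬ good t → ∃ b : Bool, (b = true → ∀ s ∈ Ioo (0:ℝ) 1, s ≤ (e (I t)).c (u t) →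
        (e (I t)).σ s ∈ E t) ∧ (b = false → ∀ s ∈ Ioo (0:ℝ) 1, (e (I t)).c (u t) ≤ s →
        (e (I t)).σ s ∈ E t) := by
      intro t ht
      simp only [good] at ht
      push Not at ht
      obtain ⟨v, hv, hvI⟩ := ht
      by_cases h0 : (e (I t)).c v ≤ 0
      · refine ⟨true, fun _ s hs hsu => ?_, fun hb => by simp at hb⟩
        exact h.conv t _ v hv (u t) (hu t) s hs (by linarith [hs.1]) hsu
      · refine ⟨false, fun hb => by simp at hb, fun _ s hs hsu => ?_⟩
        push Not at h0
        have : 1 ≤ (e (I t)).c v := by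
          by_contra h1
          push Not at h1
          exact hvI ⟨h0, h1⟩
        exact h.conv t _ (u t) (hu t) v hv s hs hsu (by linarith [hs.2])
    have hbad' : ∀ t, ∃ b : Bool, ¬ good t → (b = true → ∀ s ∈ Ioo (0:ℝ) 1, s ≤ (e (I t)).c (u t) →
        (e (I t)).σ s ∈ E t) ∧ (b = false → ∀ s ∈ Ioo (0:ℝ) 1, (e (I t)).c (u t) ≤ s →
        (e (I t)).σ s ∈ E t) := by
      intro t
      by_cases hg : good t
      · exact ⟨true, fun hh => absurd hg hh⟩
      · obtain ⟨b, hb⟩ := hbad t hg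
        exact ⟨b, fun _ => hb⟩
    choose b hb using hbad'
    have hc : B.card ≤ (Finset.univ : Finset (Fin m × Bool)).card := by
      apply Finset.card_le_card_of_injOn (fun t => (I t, b t)) (fun _ _ => by simp)
      intro t ht t' ht' htt
      simp only [Prod.mk.injEq] at htt
      obtain ⟨hI, hbb⟩ := htt
      simp only [B, Finset.coe_filter, Finset.mem_range] at ht ht'
      have h1 := hb t ht.2
      have h2 := hb t' ht'.2
      have c1 := huI t
      have c2 := huI t'
      rw [← hI] at h2 c2
      rw [← hbb] at h2
      cases hbt : b t with
      | true =>
        refine heqN t t' ((e (I t)).σ (min ((e (I t)).c (u t)) ((e (I t)).c (u t')))) ht.1 ht'.1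
          (h1.1 hbt _ ?_ (min_le_left _ _)) (h2.1 hbt _ ?_ (min_le_right _ _))
        all_goals exact ⟨lt_min c1.1 c2.1, (min_le_left _ _).trans_lt c1.2⟩
      | false =>
        refine heqN t t' ((e (I t)).σ (max ((e (I t)).c (u t)) ((e (I t)).c (u t')))) ht.1 ht'.1
          (h1.2 hbt _ ?_ (le_max_left _ _)) (h2.2 hbt _ ?_ (le_max_right _ _))
        all_goals exact ⟨c1.1.trans_le (le_max_left _ _), max_lt c1.2 c2.2⟩
    simp only [Finset.card_univ, Fintype.card_prod, Fintype.card_fin, Fintype.card_bool] at hc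
    omega
  have hpt : ∀ t, ∃ a, good t → a ∈ G ∧ a ∈ E t := by
    intro t
    by_cases hg : good t
    · obtain ⟨a, h1, h2, h3⟩ := h.point hF hf hN hΩ t (I t) hg
      exact ⟨a, fun _ => ⟨⟨h1, h3⟩, h2⟩⟩
    · exact ⟨x, fun hh => absurd hh hg⟩
  choose a ha using hpt
  have hA : A.card ≤ hfin.toFinset.card := by
    apply Finset.card_le_card_of_injOn a
    · intro t ht
      simp only [A, Finset.coe_filter, Finset.mem_range] at ht
      simpa using (ha t ht.2).1
    · intro t ht t' ht' htt
      simp only [A, Finset.coe_filter, Finset.mem_range] at ht ht'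
      refine heqN t t' (a t) ht.1 ht'.1 (ha t ht.2).2 ?_
      rw [htt]; exact (ha t' ht'.2).2
  omega


/-- For a zero entropy tree map, infinitely many points `a` of an infinite
ω-limit set satisfy: the intersection of all periodic arcs containing `a` reduces to `{a}`. -/
theorem infinite_points_with_singleton_arc_intersection {X : Type*} [MetricSpace X]
    (hX : IsTree X) (f : X → X) (hf : Continuous f) (h0 : topEntropy f = 0) (x : X)
    (hx : (omegaLimitSet f x).Infinite) :
    { a ∈ omegaLimitSet f x |
      ⋂₀ { I | (∃ s, IsPeriodicArc f I s) ∧ a ∈ I } = {a} }.Infinite := by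
  obtain ⟨m, e, hF⟩ := tree_edges hX
  have hc : CompactSpace X := hX.1
  have hp : ConnectedSpace X := hX.2.1
  exact main_dyn e hF hf (noHS_of_entropy f h0) hx
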